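/- Let α ∈ (0,1) and p > 1 real. There exists δ > 0, depending only on α and p, with the following property: for every c > 0 and every even, nontrivial steady solution φ with speed c (for either nonlinearity) that is monotonically increasing on (−π, 0) and satisfies n′(φ(x)) ≤ c for every x ∈ ℝ — where in case sgn one additionally assumes φ(−π/2) = 0 — one has c ≥ δ. Moreover, in case abs one has the stronger uniform bound c − n′(φ(−π)) ≥ δ, so in particular φ is infinitely differentiable on a neighbourhood of −π. -/

import Mathlib

open Real MeasureTheory Set Filter Topology

/-- The periodic convolution kernel `K_α`: equal to the explicit integral
representation for `x ∉ 2πℤ` and to `0` on `2πℤ`. -/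
noncomputable def Kker (α x : ℝ) : ℝ :=
  letI : Decidable (∃ k : ℤ, x = 2 * π * k) := Classical.propDecidable _
  if ∃ k : ℤ, x = 2 * π * k then 0
  else (1 / (π * Real.Gamma α)) *
    ∫ t in Set.Ioi (0:ℝ),
      t ^ (α - 1) * (Real.exp t * Real.cos x - 1) /
        (1 - 2 * Real.exp t * Real.cos x + Real.exp (2 * t))

/-- A steady travelling-wave solution of speed `c` with nonlinearity `n`:
a continuous, `2π`-periodic, zero-mean function `φ` satisfying the steady
convolution equation. -/
def IsSteadySolution (α c : ℝ) (n φ : ℝ → ℝ) : Prop :=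
  Continuous φ ∧ Function.Periodic φ (2 * π) ∧
  (∫ y in (-π)..π, φ y) = 0 ∧
  ∀ x : ℝ, (∫ y in (-π)..π, Kker α (x - y) * φ y) =
    c * φ x - n (φ x) + (1 / (2 * π)) * ∫ y in (-π)..π, n (φ y)

/-- Case abs nonlinearity `n(x) = |x|^p`. -/
noncomputable def nAbs (p x : ℝ) : ℝ := |x| ^ p
/-- Case sgn nonlinearity `n(x) = x·|x|^(p-1)`. -/
noncomputable def nSgn (p x : ℝ) : ℝ := x * |x| ^ (p - 1)
/-- Derivative of the case abs nonlinearity, `n′(x) = p·x·|x|^(p-2)`. -/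
noncomputable def nAbs' (p x : ℝ) : ℝ := p * x * |x| ^ (p - 2)
/-- Derivative of the case sgn nonlinearity, `n′(x) = p·|x|^(p-1)`. -/
noncomputable def nSgn' (p x : ℝ) : ℝ := p * |x| ^ (p - 1)

/-!
Summing a Poisson kernel under the integral gives `K_α` the Fourier cosine coefficients `k ^ (-α)`,
while subtracting the pole of `1 / (exp z - 1)` at `0` gives `K_α(x) = a |x| ^ (α - 1) + smooth`
for `0 < |x| < 2π`.

*Lower bounds.* A non-constant profile `φ` that is even and increasing on `[-π, 0]` satisfies
`∫ φ cos > 0`, and composing `φ` with a monotone function preserves its shape. If `κ y + n(y)` is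
monotone on the range of `φ`, testing the equation against `cos` therefore yields `1 ≤ c + κ`. For
`n = nSgn` one takes `κ = 0`; for `n = nAbs` one takes `κ = -n'(φ(-π))`, hence
`1 ≤ c - n'(φ(-π))`. In the latter case a small `c` would, since `n'(φ(0)) ≤ c`, force a small crest
`φ(0)`. As `φ` has mean zero, its `L¹` norm is then small, and the equation at `-π` forces a small
trough as well, contradicting `1 ≤ c - n'(φ(-π))`.

*Regularity.* Near a point `x₀` with `n'(φ(x₀)) ≠ c`, deform `φ` to `v_h(x) = φ(x + h η(x))` with
a bump `η` around `x₀`. After a change of variables the equation for `v_h`, as an element of `C(X)`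
for a short interval `X` around `x₀`, depends smoothly on `h` although `φ` is merely continuous:
the deformation multiplies the distance to the singularity of `K_α` by a smooth factor. The
implicit function theorem makes `h ↦ v_h` smooth, and `v_h(x₀) = φ(x₀ + h)`.
-/

theorem aestronglyMeasurable_deriv_of_mem_nhds {𝕜 X E : Type*} [NontriviallyNormedField 𝕜]
    [MeasurableSpace X] [NormedAddCommGroup E] [NormedSpace 𝕜 E] {μ : Measure X} {U : Set 𝕜}
    {F : 𝕜 → X → E} {ζ : 𝕜} (hU : U ∈ 𝓝 ζ) (hmeas : ∀ ξ ∈ U, AEStronglyMeasurable (F ξ) μ)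
    (hdiff : ∀ᵐ t ∂μ, DifferentiableAt 𝕜 (F · t) ζ) :
    AEStronglyMeasurable (fun t => deriv (F · t) ζ) μ := by
  have hind (ξ : 𝕜) : AEStronglyMeasurable (U.indicator F ξ) μ := by
    by_cases hξ : ξ ∈ U
    · simpa only [indicator_of_mem hξ] using hmeas ξ hξ
    · simpa only [indicator_of_notMem hξ] using aestronglyMeasurable_zero
  refine aestronglyMeasurable_of_tendsto_ae (𝓝[≠] ζ)
    (f := fun ξ t => (ξ - ζ)⁻¹ • (U.indicator F ξ t - F ζ t))
    (fun ξ => ((hind ξ).sub (hmeas ζ (mem_of_mem_nhds hU))).const_smul _) ?_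
  filter_upwards [hdiff] with t ht
  refine (hasDerivAt_iff_tendsto_slope.mp ht.hasDerivAt).congr' ?_
  filter_upwards [nhdsWithin_le_nhds hU] with ξ hξ
  rw [indicator_of_mem hξ, slope_def_module]

theorem differentiableOn_integral_of_dominated {X E : Type*} [MeasurableSpace X]
    [NormedAddCommGroup E] [NormedSpace ℂ E] [CompleteSpace E] {μ : Measure X} {U : Set ℂ}
    (hU : IsOpen U) {F : ℂ → X → E} {b : X → ℝ}
    (hmeas : ∀ ζ ∈ U, AEStronglyMeasurable (F ζ) μ)
    (hdiff : ∀ᵐ t ∂μ, DifferentiableOn ℂ (F · t) U)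
    (hbound : ∀ᵐ t ∂μ, ∀ ζ ∈ U, ‖F ζ t‖ ≤ b t) (hb : Integrable b μ) :
    DifferentiableOn ℂ (fun ζ => ∫ t, F ζ t ∂μ) U := by
  intro ζ hζ
  obtain ⟨r, hr, hrU⟩ := Metric.nhds_basis_closedBall.mem_iff.mp (hU.mem_nhds hζ)
  have hball : ∀ ξ ∈ Metric.ball ζ (r / 2), Metric.closedBall ξ (r / 2) ⊆ U := fun ξ hξ =>
    (Metric.closedBall_subset_closedBall' (by linarith [Metric.mem_ball.mp hξ])).trans hrU
  have hmem : ∀ ξ ∈ Metric.ball ζ (r / 2), ξ ∈ U := fun ξ hξ =>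
    hball ξ hξ (Metric.mem_closedBall_self (by positivity))
  have hderiv_bound : ∀ᵐ t ∂μ, ∀ ξ ∈ Metric.ball ζ (r / 2), ‖deriv (F · t) ξ‖ ≤ b t / (r / 2) := by
    filter_upwards [hdiff, hbound] with t ht hbt ξ hξ
    refine Complex.norm_deriv_le_of_forall_mem_sphere_norm_le (by positivity) ?_
      fun z hz => hbt z (hball ξ hξ (Metric.sphere_subset_closedBall hz))
    exact (ht.mono (Metric.closure_ball_subset_closedBall.trans (hball ξ hξ))).diffContOnCl
  refine (hasDerivAt_integral_of_dominated_loc_of_deriv_le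
    (Metric.ball_mem_nhds ζ (half_pos hr)) ?_ ?_ ?_ hderiv_bound (hb.div_const _)
    ?_).2.differentiableAt.differentiableWithinAt
  · filter_upwards [hU.mem_nhds hζ] with ξ hξ using hmeas ξ hξ
  · exact hb.mono' (hmeas ζ hζ) (hbound.mono fun t ht => ht ζ hζ)
  · exact aestronglyMeasurable_deriv_of_mem_nhds (hU.mem_nhds hζ) hmeas
      (hdiff.mono fun t ht => ht.differentiableAt (hU.mem_nhds hζ))
  · filter_upwards [hdiff] with t ht ξ hξ
    exact (ht.differentiableAt (hU.mem_nhds (hmem ξ hξ))).hasDerivAt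

/-! ### The singularity of the kernel -/

/-- The function `(exp z - 1) / z`, continued by `1` to the origin. -/
noncomputable def expSubOneSlope : ℂ → ℂ := dslope Complex.exp 0

/-- The function `1 / (exp z - 1) - 1 / z`, continued holomorphically to the origin: the regular
part of the summed geometric series `∑ exp (-k z)`. -/
noncomputable def invExpSubOneReg : ℂ → ℂ := dslope (fun z => (expSubOneSlope z)⁻¹) 0

theorem expSubOneSlope_zero : expSubOneSlope 0 = 1 := by
  simp [expSubOneSlope]

theorem expSubOneSlope_of_ne {z : ℂ} (hz : z ≠ 0) :
    expSubOneSlope z = (Complex.exp z - 1) / z := by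
  simp [expSubOneSlope, dslope_of_ne _ hz, slope_def_field]

theorem exp_sub_one_ne_zero_of_abs_im_lt {z : ℂ} (hz : |z.im| < 2 * π) (hz₀ : z ≠ 0) :
    Complex.exp z - 1 ≠ 0 := by
  intro h
  obtain ⟨n, hn⟩ := Complex.exp_eq_one_iff.mp (sub_eq_zero.mp h)
  have him : z.im = n * (2 * π) := by simp [hn]
  have hn_lt : |(n : ℝ)| < 1 := by
    rw [him, abs_mul, abs_of_pos two_pi_pos] at hz
    nlinarith [two_pi_pos]
  have hn_zero : n = 0 := Int.abs_lt_one_iff.mp (by exact_mod_cast hn_lt)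
  exact hz₀ (by simp [hn, hn_zero])

theorem expSubOneSlope_ne_zero {z : ℂ} (hz : |z.im| < 2 * π) : expSubOneSlope z ≠ 0 := by
  rcases eq_or_ne z 0 with rfl | hz₀
  · simp [expSubOneSlope_zero]
  · rw [expSubOneSlope_of_ne hz₀]
    exact div_ne_zero (exp_sub_one_ne_zero_of_abs_im_lt hz hz₀) hz₀

theorem invExpSubOneReg_of_ne {z : ℂ} (hz : |z.im| < 2 * π) (hz₀ : z ≠ 0) :
    invExpSubOneReg z = (Complex.exp z - 1)⁻¹ - z⁻¹ := by
  have hexp := exp_sub_one_ne_zero_of_abs_im_lt hz hz₀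
  simp only [invExpSubOneReg, dslope_of_ne _ hz₀, slope_def_field, expSubOneSlope_zero,
    expSubOneSlope_of_ne hz₀]
  field_simp
  ring

theorem isOpen_abs_im_lt (R : ℝ) : IsOpen {z : ℂ | |z.im| < R} :=
  isOpen_lt (by fun_prop) continuous_const

theorem differentiableOn_invExpSubOneReg :
    DifferentiableOn ℂ invExpSubOneReg {z | |z.im| < 2 * π} := by
  have hnhds : {z : ℂ | |z.im| < 2 * π} ∈ 𝓝 0 :=
    (isOpen_abs_im_lt _).mem_nhds (by simp [pi_pos])
  refine (Complex.differentiableOn_dslope hnhds).mpr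
    (DifferentiableOn.fun_inv ?_ fun z hz => expSubOneSlope_ne_zero hz)
  exact (Complex.differentiableOn_dslope hnhds).mpr Complex.differentiable_exp.differentiableOn

theorem norm_inv_exp_sub_one_le {z : ℂ} (hz : 0 < z.re) :
    ‖(Complex.exp z - 1)⁻¹‖ ≤ (z.re)⁻¹ := by
  rw [norm_inv]
  refine inv_anti₀ hz ?_
  calc z.re ≤ Real.exp z.re - 1 := by linarith [Real.add_one_le_exp z.re]
    _ = ‖Complex.exp z‖ - ‖(1 : ℂ)‖ := by rw [Complex.norm_exp, norm_one]
    _ ≤ ‖Complex.exp z - 1‖ := norm_sub_norm_le _ _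

theorem norm_invExpSubOneReg_le {z : ℂ} (hre : 0 < z.re) (him : |z.im| < 2 * π) :
    ‖invExpSubOneReg z‖ ≤ 2 * (z.re)⁻¹ := by
  have hz₀ : z ≠ 0 := fun h => by simp [h] at hre
  have hinv : ‖z⁻¹‖ ≤ (z.re)⁻¹ := by
    rw [norm_inv]
    exact inv_anti₀ hre (Complex.re_le_norm z)
  rw [invExpSubOneReg_of_ne him hz₀, two_mul]
  exact (norm_sub_le _ _).trans (add_le_add (norm_inv_exp_sub_one_le hre) hinv)

theorem exists_norm_invExpSubOneReg_le {R : ℝ} (hR : R < 2 * π) :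
    ∃ C ≥ 0, ∀ z : ℂ, -1 ≤ z.re → |z.im| ≤ R → ‖invExpSubOneReg z‖ ≤ C / (2 + z.re) := by
  have hcompact : IsCompact (Icc (-1 : ℝ) 1 ×ℂ Icc (-R) R) := isCompact_Icc.reProdIm isCompact_Icc
  have hsub : Icc (-1 : ℝ) 1 ×ℂ Icc (-R) R ⊆ {z | |z.im| < 2 * π} := fun z hz =>
    (abs_le.mpr hz.2).trans_lt hR
  obtain ⟨B, hB⟩ := hcompact.exists_bound_of_continuousOn
    (differentiableOn_invExpSubOneReg.continuousOn.mono hsub)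
  refine ⟨max 6 (3 * B), by positivity, fun z hre him => ?_⟩
  rw [le_div_iff₀ (by linarith)]
  rcases le_total z.re 1 with hle | hge
  · have hz := hB z ⟨⟨hre, hle⟩, abs_le.mp him⟩
    nlinarith [norm_nonneg (invExpSubOneReg z), le_max_right 6 (3 * B)]
  · have hz := norm_invExpSubOneReg_le (by linarith) (him.trans_lt hR)
    have hratio : (z.re)⁻¹ * (2 + z.re) ≤ 3 := by
      rw [inv_mul_le_iff₀ (by linarith)]
      linarith
    calc ‖invExpSubOneReg z‖ * (2 + z.re) ≤ 2 * (z.re)⁻¹ * (2 + z.re) := by gcongr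
      _ ≤ 6 := by linarith
      _ ≤ max 6 (3 * B) := le_max_left _ _

theorem integrableOn_rpow_mul_inv_one_add {α : ℝ} (hα : α ∈ Ioo (0 : ℝ) 1) :
    IntegrableOn (fun t : ℝ => t ^ (α - 1) * (1 + t)⁻¹) (Ioi 0) := by
  refine mellin_convergent_of_isBigO_scalar (a := 1) (b := 0)
    (ContinuousOn.locallyIntegrableOn ?_ measurableSet_Ioi) ?_ hα.2 ?_ hα.1
  · exact ContinuousOn.inv₀ (by fun_prop) fun t (ht : 0 < t) => by positivity
  · refine Asymptotics.IsBigO.of_bound 1 ?_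
    filter_upwards [eventually_gt_atTop 0] with t ht
    rw [rpow_neg_one, one_mul, norm_of_nonneg (by positivity), norm_of_nonneg (by positivity)]
    exact inv_anti₀ ht (by linarith)
  · refine Asymptotics.IsBigO.of_bound 1 ?_
    filter_upwards [self_mem_nhdsWithin] with t (ht : 0 < t)
    rw [neg_zero, rpow_zero, norm_one, mul_one, norm_of_nonneg (by positivity)]
    exact inv_le_one_of_one_le₀ (by linarith)

theorem integrableOn_rpow_smul_of_norm_le {E : Type*} [NormedAddCommGroup E] [NormedSpace ℝ E]
    {α C : ℝ} (hα : α ∈ Ioo (0 : ℝ) 1) {f : ℝ → E}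
    (hf : AEStronglyMeasurable f (volume.restrict (Ioi 0)))
    (hle : ∀ t > 0, ‖f t‖ ≤ C / (1 + t)) :
    IntegrableOn (fun t : ℝ => t ^ (α - 1) • f t) (Ioi 0) := by
  refine ((integrableOn_rpow_mul_inv_one_add hα).const_mul C).mono'
    ((measurable_id.pow_const _).aestronglyMeasurable.smul hf) ?_
  refine ae_restrict_of_forall_mem measurableSet_Ioi fun t (ht : 0 < t) => ?_
  rw [norm_smul, norm_of_nonneg (by positivity), mul_left_comm, ← div_eq_mul_inv]
  gcongr
  exact hle t ht

/-- The regular part of `π Γ(α) K_α`, extended holomorphically to a complex neighbourhood of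
`(-2π, 2π)`. -/
noncomputable def kernelReg (α : ℝ) (ζ : ℂ) : ℂ :=
  ∫ t in Ioi (0 : ℝ), t ^ (α - 1) • invExpSubOneReg (t - Complex.I * ζ)

theorem aestronglyMeasurable_invExpSubOneReg_line {ζ : ℂ} (hζ : |ζ.re| < 2 * π) {μ : Measure ℝ} :
    AEStronglyMeasurable (fun t : ℝ => invExpSubOneReg (t - Complex.I * ζ)) μ := by
  have hcont : Continuous fun t : ℝ => invExpSubOneReg (t - Complex.I * ζ) :=
    continuousOn_univ.mp (differentiableOn_invExpSubOneReg.continuousOn.comp (by fun_prop)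
      fun t _ => by simpa using hζ)
  exact hcont.aestronglyMeasurable

theorem exists_norm_invExpSubOneReg_line_le {R : ℝ} (hR : R < 2 * π) :
    ∃ C, ∀ ζ : ℂ, |ζ.re| ≤ R → |ζ.im| ≤ 1 → ∀ t : ℝ, 0 < t →
      ‖invExpSubOneReg (t - Complex.I * ζ)‖ ≤ C / (1 + t) := by
  obtain ⟨C, hC₀, hC⟩ := exists_norm_invExpSubOneReg_le hR
  refine ⟨C, fun ζ hre him t ht => ?_⟩
  have hz_re : (t - Complex.I * ζ).re = t + ζ.im := by simp
  have him_ge := (abs_le.mp him).1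
  refine (hC _ (by linarith) (by simpa using hre)).trans ?_
  exact div_le_div_of_nonneg_left hC₀ (by linarith) (by linarith)

theorem integrableOn_kernelReg {α : ℝ} (hα : α ∈ Ioo (0 : ℝ) 1) {ζ : ℂ} (hre : |ζ.re| < 2 * π)
    (him : |ζ.im| ≤ 1) :
    IntegrableOn (fun t : ℝ => t ^ (α - 1) • invExpSubOneReg (t - Complex.I * ζ)) (Ioi 0) := by
  obtain ⟨C, hC⟩ := exists_norm_invExpSubOneReg_line_le hre
  exact integrableOn_rpow_smul_of_norm_le hα (aestronglyMeasurable_invExpSubOneReg_line hre)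
    (hC ζ le_rfl him)

theorem isOpen_abs_re_lt_and_abs_im_lt (R r : ℝ) :
    IsOpen {ζ : ℂ | |ζ.re| < R ∧ |ζ.im| < r} :=
  (isOpen_lt (by fun_prop : Continuous fun ζ : ℂ => |ζ.re|) continuous_const).inter
    (isOpen_abs_im_lt r)

theorem differentiableOn_kernelReg {α : ℝ} (hα : α ∈ Ioo (0 : ℝ) 1) :
    DifferentiableOn ℂ (kernelReg α) {ζ | |ζ.re| < 2 * π ∧ |ζ.im| < 1} := by
  intro ζ hζ
  obtain ⟨R, hζR, hR⟩ := exists_between hζ.1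
  obtain ⟨C, hC⟩ := exists_norm_invExpSubOneReg_line_le hR
  have hU := isOpen_abs_re_lt_and_abs_im_lt R 1
  refine ((differentiableOn_integral_of_dominated hU
    (b := fun t => C * (t ^ (α - 1) * (1 + t)⁻¹))
    (fun ξ hξ => (integrableOn_kernelReg hα (hξ.1.trans hR) hξ.2.le).aestronglyMeasurable) ?_ ?_
    ((integrableOn_rpow_mul_inv_one_add hα).const_mul C)).differentiableAt
      (hU.mem_nhds ⟨hζR, hζ.2⟩)).differentiableWithinAt
  · refine .of_forall fun t => DifferentiableOn.fun_const_smul ?_ _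
    exact differentiableOn_invExpSubOneReg.comp (by fun_prop) fun ξ hξ => by
      simpa using hξ.1.trans hR
  · refine ae_restrict_of_forall_mem measurableSet_Ioi fun t (ht : 0 < t) ξ hξ => ?_
    rw [norm_smul, norm_of_nonneg (by positivity), mul_left_comm, ← div_eq_mul_inv]
    gcongr
    exact hC ξ hξ.1.le hξ.2.le t ht

theorem contDiffOn_re_kernelReg {α : ℝ} (hα : α ∈ Ioo (0 : ℝ) 1) :
    ContDiffOn ℝ (⊤ : ℕ∞) (fun x : ℝ => (kernelReg α x).re) (Ioo (-(2 * π)) (2 * π)) := by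
  have hreal : ContDiffOn ℝ (⊤ : ℕ∞) (kernelReg α) {ζ | |ζ.re| < 2 * π ∧ |ζ.im| < 1} :=
    ((differentiableOn_kernelReg hα).contDiffOn
      (isOpen_abs_re_lt_and_abs_im_lt _ _)).restrict_scalars ℝ
  refine Complex.reCLM.contDiff.comp_contDiffOn
    (hreal.comp Complex.ofRealCLM.contDiff.contDiffOn fun x hx => ?_)
  simpa using abs_lt.mpr hx

/-- The sum `∑ exp (-k t) cos (k x)` over `k ≥ 1` in closed form: a shifted and halved Poisson
kernel. -/
noncomputable def poissonSum (t x : ℝ) : ℝ :=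
  ((Complex.exp (t - Complex.I * x) - 1)⁻¹).re

theorem exp_sub_I_mul (t x : ℝ) :
    Complex.exp (t - Complex.I * x) = ⟨Real.exp t * Real.cos x, -(Real.exp t * Real.sin x)⟩ := by
  apply Complex.ext <;> simp [Complex.exp_re, Complex.exp_im]

theorem normSq_exp_sub_one (t x : ℝ) :
    Complex.normSq (Complex.exp (t - Complex.I * x) - 1) =
      1 - 2 * Real.exp t * Real.cos x + Real.exp (2 * t) := by
  have hexp : Real.exp (2 * t) = Real.exp t ^ 2 := (Real.exp_nat_mul t 2)
  simp only [exp_sub_I_mul, Complex.normSq_apply, Complex.sub_re, Complex.sub_im, Complex.one_re,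
    Complex.one_im, hexp]
  linear_combination Real.exp t ^ 2 * Real.sin_sq_add_cos_sq x

theorem poissonSum_eq (t x : ℝ) :
    poissonSum t x = (Real.exp t * Real.cos x - 1) /
      (1 - 2 * Real.exp t * Real.cos x + Real.exp (2 * t)) := by
  rw [poissonSum, Complex.inv_re, normSq_exp_sub_one, exp_sub_I_mul, Complex.sub_re,
    Complex.one_re]

theorem Kker_of_exists {α x : ℝ} (hx : ∃ k : ℤ, x = 2 * π * k) : Kker α x = 0 := by
  rw [Kker, if_pos hx]

theorem Kker_of_not_exists {α x : ℝ} (hx : ¬∃ k : ℤ, x = 2 * π * k) :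
    Kker α x = 1 / (π * Real.Gamma α) * ∫ t in Ioi (0 : ℝ), t ^ (α - 1) * poissonSum t x := by
  rw [Kker, if_neg hx]
  simp only [poissonSum_eq, mul_div_assoc]

theorem Kker_zero (α : ℝ) : Kker α 0 = 0 := Kker_of_exists ⟨0, by simp⟩

theorem exists_eq_two_pi_mul_iff {x : ℝ} : (∃ k : ℤ, x = 2 * π * k) ↔ Real.cos x = 1 := by
  rw [Real.cos_eq_one_iff]
  exact exists_congr fun k => by rw [mul_comm (2 * π), eq_comm]

theorem Kker_congr_cos {α x y : ℝ} (h : Real.cos x = Real.cos y) : Kker α x = Kker α y := by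
  simp only [Kker, exists_eq_two_pi_mul_iff, h]

theorem Kker_neg (α x : ℝ) : Kker α (-x) = Kker α x := Kker_congr_cos (Real.cos_neg x)

theorem Kker_periodic (α : ℝ) : Function.Periodic (Kker α) (2 * π) := fun x =>
  Kker_congr_cos (Real.cos_add_two_pi x)

theorem integral_rpow_mul_div_sq_add_sq {x : ℝ} (hx : x ≠ 0) (α : ℝ) :
    ∫ t in Ioi (0 : ℝ), t ^ (α - 1) * (t / (t ^ 2 + x ^ 2)) =
      (∫ t in Ioi (0 : ℝ), t ^ (α - 1) * (t / (t ^ 2 + 1))) * |x| ^ (α - 1) := by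
  have hx' : 0 < |x| := abs_pos.mpr hx
  have hscale := integral_comp_mul_left_Ioi
    (fun t : ℝ => t ^ (α - 1) * (t / (t ^ 2 + x ^ 2))) 0 hx'
  rw [mul_zero, smul_eq_mul, inv_mul_eq_div, eq_div_iff hx'.ne'] at hscale
  rw [← hscale, ← integral_mul_const, ← integral_mul_const]
  refine setIntegral_congr_fun measurableSet_Ioi fun t (ht : 0 < t) => ?_
  rw [← sq_abs x]
  simp only [Real.mul_rpow hx'.le ht.le]
  field_simp

theorem integrableOn_rpow_mul_div_sq_add_sq {α x : ℝ} (hα : α ∈ Ioo (0 : ℝ) 1) (hx : x ≠ 0) :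
    IntegrableOn (fun t : ℝ => t ^ (α - 1) * (t / (t ^ 2 + x ^ 2))) (Ioi 0) := by
  have hx2 : 0 < x ^ 2 := by positivity
  refine integrableOn_rpow_smul_of_norm_le (C := 2 + 1 / x ^ 2) hα
    (Continuous.div (by fun_prop) (by fun_prop) fun t => by positivity).aestronglyMeasurable
    fun t ht => ?_
  rw [norm_of_nonneg (by positivity), div_le_div_iff₀ (by positivity) (by positivity)]
  have hsplit : (2 + 1 / x ^ 2) * (t ^ 2 + x ^ 2) = 2 * t ^ 2 + 2 * x ^ 2 + 1 + t ^ 2 / x ^ 2 := by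
    field_simp
    ring
  nlinarith [sq_nonneg (t - 1), show 0 ≤ t ^ 2 / x ^ 2 by positivity]

theorem poissonSum_eq_add {t x : ℝ} (ht : 0 < t) (hx : |x| < 2 * π) :
    poissonSum t x = t / (t ^ 2 + x ^ 2) + (invExpSubOneReg (t - Complex.I * x)).re := by
  have hz₀ : (t - Complex.I * x : ℂ) ≠ 0 := fun h => ht.ne' (by simpa using congrArg Complex.re h)
  have hinv : ((t - Complex.I * x : ℂ)⁻¹).re = t / (t ^ 2 + x ^ 2) := by
    simp [Complex.inv_re, Complex.normSq_apply, sq]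
  rw [invExpSubOneReg_of_ne (by simpa using hx) hz₀, Complex.sub_re, hinv, poissonSum]
  ring

theorem integral_rpow_mul_poissonSum {α x : ℝ} (hα : α ∈ Ioo (0 : ℝ) 1) (hx₀ : x ≠ 0)
    (hx : |x| < 2 * π) :
    ∫ t in Ioi (0 : ℝ), t ^ (α - 1) * poissonSum t x =
      (∫ t in Ioi (0 : ℝ), t ^ (α - 1) * (t / (t ^ 2 + 1))) * |x| ^ (α - 1) +
        (kernelReg α x).re := by
  have hint := integrableOn_kernelReg (ζ := x) hα (by simpa using hx) (by simp)
  have hre : (kernelReg α x).re =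
      ∫ t in Ioi (0 : ℝ), t ^ (α - 1) * (invExpSubOneReg (t - Complex.I * x)).re := by
    simpa [kernelReg] using (Complex.reCLM.integral_comp_comm hint).symm
  have hint_re : IntegrableOn
      (fun t : ℝ => t ^ (α - 1) * (invExpSubOneReg (t - Complex.I * x)).re) (Ioi 0) := by
    simpa [IntegrableOn] using Complex.reCLM.integrable_comp hint
  rw [hre, ← integral_rpow_mul_div_sq_add_sq hx₀,
    ← integral_add (integrableOn_rpow_mul_div_sq_add_sq hα hx₀) hint_re]
  refine setIntegral_congr_fun measurableSet_Ioi fun t ht => ?_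
  simp only [poissonSum_eq_add ht hx, mul_add]

theorem exists_Kker_eq_rpow_add {α : ℝ} (hα : α ∈ Ioo (0 : ℝ) 1) :
    ∃ (a : ℝ) (S : ℝ → ℝ), ContDiffOn ℝ (⊤ : ℕ∞) S (Ioo (-(2 * π)) (2 * π)) ∧
      ∀ x, x ≠ 0 → |x| < 2 * π → Kker α x = a * |x| ^ (α - 1) + S x := by
  refine ⟨1 / (π * Real.Gamma α) * ∫ t in Ioi (0 : ℝ), t ^ (α - 1) * (t / (t ^ 2 + 1)),
    fun x => 1 / (π * Real.Gamma α) * (kernelReg α x).re,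
    contDiffOn_const.mul (contDiffOn_re_kernelReg hα), fun x hx₀ hx => ?_⟩
  have hcos : Real.cos x ≠ 1 := fun h =>
    hx₀ ((Real.cos_eq_one_iff_of_lt_of_lt (abs_lt.mp hx).1 (abs_lt.mp hx).2).mp h)
  rw [Kker_of_not_exists (exists_eq_two_pi_mul_iff.not.mpr hcos),
    integral_rpow_mul_poissonSum hα hx₀ hx]
  ring

theorem intervalIntegrable_Kker {α : ℝ} (hα : α ∈ Ioo (0 : ℝ) 1) (a b : ℝ) :
    IntervalIntegrable (Kker α) volume a b := by
  have hpos : IntervalIntegrable (Kker α) volume 0 π := by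
    obtain ⟨A, S, hS, hK⟩ := exists_Kker_eq_rpow_add hα
    have hSint : IntervalIntegrable S volume 0 π :=
      (hS.continuousOn.mono (Icc_subset_Ioo (by linarith [pi_pos]) (by linarith [pi_pos])))
        |>.intervalIntegrable_of_Icc pi_pos.le
    have hpow : IntervalIntegrable (fun x : ℝ => x ^ (α - 1)) volume 0 π :=
      intervalIntegral.intervalIntegrable_rpow' (by linarith [hα.1])
    refine ((hpow.const_mul A).add hSint).congr fun x hx => ?_
    rw [uIoc_of_le pi_pos.le] at hx
    rw [hK x hx.1.ne' (by rw [abs_of_pos hx.1]; linarith [hx.2, pi_pos]), abs_of_pos hx.1]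
  have hneg : IntervalIntegrable (Kker α) volume (-π) 0 := by
    simpa [Kker_neg] using (hpos.comp_sub_left 0).symm
  refine (Kker_periodic α).intervalIntegrable (t := -π) two_pi_pos.ne' ?_ a b
  rw [show -π + 2 * π = π by ring]
  exact hneg.trans hpos

/-! ### Fourier coefficients of the kernel -/

theorem hasSum_poissonSum {t : ℝ} (ht : 0 < t) (x : ℝ) :
    HasSum (fun k : ℕ => Real.exp (-t) ^ (k + 1) * Real.cos ((k + 1 : ℕ) * x))
      (poissonSum t x) := by
  set z : ℂ := Complex.exp (-(t - Complex.I * x)) with hz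
  have hnorm : ‖z‖ < 1 := by
    rw [hz, Complex.norm_exp]
    simp [ht]
  have hsum : z * (1 - z)⁻¹ = (Complex.exp (t - Complex.I * x) - 1)⁻¹ := by
    have hz₁ : 1 - z ≠ 0 := sub_ne_zero.mpr fun h => by simp [← h] at hnorm
    have hz₀ : z ≠ 0 := Complex.exp_ne_zero _
    rw [show Complex.exp (t - Complex.I * x) = z⁻¹ by rw [hz, Complex.exp_neg, inv_inv]]
    field_simp
  have hgeom := Complex.hasSum_re ((hasSum_geometric_of_norm_lt_one hnorm).mul_left z)
  rw [hsum] at hgeom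
  convert! hgeom using 2 with k
  rw [← pow_succ', hz, ← Complex.exp_nat_mul, Complex.exp_re, ← Real.exp_nat_mul]
  simp

theorem integral_cos_int_mul {m : ℤ} (hm : m ≠ 0) : ∫ x in (-π)..π, Real.cos (m * x) = 0 := by
  rw [intervalIntegral.integral_comp_mul_left (fun x => Real.cos x) (Int.cast_ne_zero.mpr hm),
    integral_cos]
  simp [Real.sin_int_mul_pi]

theorem integral_cos_nat_mul_mul_cos_nat_mul {j k : ℕ} (hk : k ≠ 0) :
    ∫ x in (-π)..π, Real.cos (j * x) * Real.cos (k * x) = if j = k then π else 0 := by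
  have hprod (x : ℝ) : Real.cos (j * x) * Real.cos (k * x) =
      (Real.cos (((j + k : ℕ) : ℤ) * x) + Real.cos (((j : ℤ) - k : ℤ) * x)) / 2 := by
    push_cast
    rw [add_mul, sub_mul, Real.cos_add, Real.cos_sub]
    ring
  simp only [hprod]
  rw [intervalIntegral.integral_div, intervalIntegral.integral_add
    (Continuous.intervalIntegrable (by fun_prop) _ _)
    (Continuous.intervalIntegrable (by fun_prop) _ _), integral_cos_int_mul (by omega)]
  split_ifs with h
  · simp [h]
  · rw [integral_cos_int_mul (by omega)]
    simp

theorem integral_poissonSum_mul_cos {t : ℝ} (ht : 0 < t) {k : ℕ} (hk : k ≠ 0) :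
    ∫ x in (-π)..π, poissonSum t x * Real.cos (k * x) = π * Real.exp (-(k * t)) := by
  let f : ℕ → C(ℝ, ℝ) := fun j =>
    ⟨fun x => Real.exp (-t) ^ (j + 1) * (Real.cos ((j + 1 : ℕ) * x) * Real.cos (k * x)),
      by fun_prop⟩
  have hsummable : Summable fun j => ‖(f j).restrict (⟨uIcc (-π) π, isCompact_uIcc⟩ :
      TopologicalSpace.Compacts ℝ)‖ := by
    refine Summable.of_nonneg_of_le (fun _ => norm_nonneg _) (fun j => ?_)
      ((summable_nat_add_iff 1).mpr (summable_geometric_of_lt_one (Real.exp_pos (-t)).le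
        (by simpa using ht)))
    refine (ContinuousMap.norm_le _ (by positivity)).mpr fun x => ?_
    simp only [f, ContinuousMap.restrict_apply, ContinuousMap.coe_mk, norm_mul, Real.norm_eq_abs]
    rw [abs_of_nonneg (by positivity)]
    exact mul_le_of_le_one_right (by positivity)
      (mul_le_one₀ (Real.abs_cos_le_one _) (abs_nonneg _) (Real.abs_cos_le_one _))
  have hsum := intervalIntegral.hasSum_intervalIntegral_of_summable_norm hsummable
  have htsum (x : ℝ) : ∑' j, f j x = poissonSum t x * Real.cos (k * x) := by
    simpa [f, mul_assoc] using ((hasSum_poissonSum ht x).mul_right (Real.cos (k * x))).tsum_eq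
  have hterm (j : ℕ) : ∫ x in (-π)..π, f j x =
      if j = k - 1 then π * Real.exp (-(k * t)) else 0 := by
    simp only [f, ContinuousMap.coe_mk, intervalIntegral.integral_const_mul,
      integral_cos_nat_mul_mul_cos_nat_mul hk]
    by_cases h : j + 1 = k
    · rw [if_pos h, if_pos (by omega), h, ← Real.exp_nat_mul, mul_comm]
      simp
    · rw [if_neg h, if_neg (by omega), mul_zero]
  simp only [htsum, hterm] at hsum
  exact hsum.unique (hasSum_ite_eq _ _)

theorem mul_exp_half_le_norm_exp_sub_one {z : ℂ} (hz : 0 ≤ z.re) :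
    z.re * Real.exp (z.re / 2) ≤ ‖Complex.exp z - 1‖ := by
  have hexp : Real.exp z.re - 1 = Real.exp (z.re / 2) * (2 * Real.sinh (z.re / 2)) := by
    have hadd : Real.exp z.re = Real.exp (z.re / 2) * Real.exp (z.re / 2) := by
      rw [← Real.exp_add, add_halves]
    have hneg : Real.exp (z.re / 2) * Real.exp (-(z.re / 2)) = 1 := by
      rw [← Real.exp_add, add_neg_cancel, Real.exp_zero]
    rw [Real.sinh_eq, hadd]
    linear_combination hneg
  have hsinh : z.re / 2 ≤ Real.sinh (z.re / 2) := Real.self_le_sinh_iff.mpr (by linarith)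
  calc z.re * Real.exp (z.re / 2) ≤ Real.exp z.re - 1 := by
        rw [hexp]
        nlinarith [Real.exp_pos (z.re / 2)]
    _ = ‖Complex.exp z‖ - ‖(1 : ℂ)‖ := by rw [Complex.norm_exp, norm_one]
    _ ≤ ‖Complex.exp z - 1‖ := norm_sub_norm_le _ _

theorem two_div_pi_mul_abs_le_norm_exp_sub_one {t x : ℝ} (ht : 0 ≤ t) (hx : |x| ≤ π) :
    2 / π * |x| ≤ ‖Complex.exp (t - Complex.I * x) - 1‖ := by
  have hcos : 2 / π ^ 2 * x ^ 2 ≤ 1 - Real.cos x := by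
    linarith [Real.cos_le_one_sub_mul_cos_sq hx]
  have hexp : Real.exp (2 * t) = Real.exp t ^ 2 := Real.exp_nat_mul t 2
  refine (abs_le_of_sq_le_sq' ?_ (norm_nonneg _)).2
  rw [← Complex.normSq_eq_norm_sq, normSq_exp_sub_one, hexp, mul_pow, sq_abs]
  calc (2 / π) ^ 2 * x ^ 2 = 2 * (2 / π ^ 2 * x ^ 2) := by field_simp
    _ ≤ 1 - 2 * Real.exp t * Real.cos x + Real.exp t ^ 2 := by
      nlinarith [sq_nonneg (Real.exp t - 1), Real.one_le_exp ht, Real.cos_le_one x]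

theorem abs_poissonSum_le {t x θ : ℝ} (hθ : θ ∈ Icc (0 : ℝ) 1) (ht : 0 < t) (hx₀ : x ≠ 0)
    (hx : |x| ≤ π) :
    |poissonSum t x| ≤ (2 / π * |x|) ^ (θ - 1) * (t * Real.exp (t / 2)) ^ (-θ) := by
  set w := ‖Complex.exp (t - Complex.I * x) - 1‖ with hw
  have hxw : 2 / π * |x| ≤ w := two_div_pi_mul_abs_le_norm_exp_sub_one ht.le hx
  have htw : t * Real.exp (t / 2) ≤ w := by
    simpa using mul_exp_half_le_norm_exp_sub_one (z := t - Complex.I * x) (by simpa using ht.le)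
  have hx_pos : 0 < 2 / π * |x| := by positivity
  have hw_pos : 0 < w := hx_pos.trans_le hxw
  calc |poissonSum t x| ≤ w⁻¹ := by
        rw [hw, ← norm_inv]
        exact Complex.abs_re_le_norm _
    _ = w ^ (θ - 1) * w ^ (-θ) := by
        rw [← Real.rpow_add hw_pos, ← Real.rpow_neg_one]
        ring_nf
    _ ≤ _ := mul_le_mul (Real.rpow_le_rpow_of_nonpos hx_pos hxw (by linarith [hθ.2]))
        (Real.rpow_le_rpow_of_nonpos (by positivity) htw (by linarith [hθ.1]))
        (by positivity) (by positivity)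

theorem intervalIntegrable_abs_rpow {r : ℝ} (hr : -1 < r) {b : ℝ} (hb : 0 ≤ b) :
    IntervalIntegrable (fun x : ℝ => |x| ^ r) volume (-b) b := by
  have hpos : IntervalIntegrable (fun x : ℝ => |x| ^ r) volume 0 b := by
    refine (intervalIntegral.intervalIntegrable_rpow' hr).congr fun x hx => ?_
    rw [uIoc_of_le hb] at hx
    rw [abs_of_pos hx.1]
  have hneg : IntervalIntegrable (fun x : ℝ => |x| ^ r) volume (-b) 0 := by
    simpa using (hpos.comp_sub_left 0).symm
  exact hneg.trans hpos

theorem integrableOn_rpow_mul_exp_half {α θ : ℝ} (hθ : θ ∈ Ioo 0 α) :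
    IntegrableOn (fun t : ℝ => t ^ (α - 1) * (t * Real.exp (t / 2)) ^ (-θ)) (Ioi 0) := by
  refine (integrableOn_rpow_mul_exp_neg_mul_rpow (p := 1) (s := α - 1 - θ) (b := θ / 2)
    (by linarith [hθ.2]) one_pos (by linarith [hθ.1])).congr_fun (fun t (ht : 0 < t) => ?_)
    measurableSet_Ioi
  simp only [Real.rpow_one]
  rw [Real.mul_rpow ht.le (Real.exp_pos _).le, ← mul_assoc, ← Real.rpow_add ht, ← Real.exp_mul,
    sub_eq_add_neg]
  ring_nf

theorem integrable_rpow_mul_poissonSum_mul_cos {α : ℝ} (hα : α ∈ Ioo (0 : ℝ) 1) (k : ℕ) :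
    Integrable (fun q : ℝ × ℝ => q.2 ^ (α - 1) * poissonSum q.2 q.1 * Real.cos (k * q.1))
      ((volume.restrict (Ioc (-π) π)).prod (volume.restrict (Ioi 0))) := by
  have hx_int : IntegrableOn (fun x : ℝ => (2 / π * |x|) ^ (α / 2 - 1)) (Ioc (-π) π) := by
    rw [← intervalIntegrable_iff_integrableOn_Ioc_of_le (by linarith [pi_pos])]
    simpa only [Real.mul_rpow (show 0 ≤ 2 / π by positivity) (abs_nonneg _)] using
      (intervalIntegrable_abs_rpow (by linarith [hα.1]) pi_pos.le).const_mul _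
  have ht_int := integrableOn_rpow_mul_exp_half (α := α) (θ := α / 2)
    ⟨by linarith [hα.1], by linarith [hα.1]⟩
  refine (hx_int.mul_prod ht_int).mono' ?_ ?_
  · refine Measurable.aestronglyMeasurable ?_
    unfold poissonSum
    fun_prop
  · have hne : ∀ᵐ q : ℝ × ℝ ∂(volume.prod volume), q.1 ≠ 0 :=
      Measure.quasiMeasurePreserving_fst.ae (Measure.ae_ne volume 0)
    rw [Measure.prod_restrict, ae_restrict_iff' (measurableSet_Ioc.prod measurableSet_Ioi)]
    filter_upwards [hne] with q hq₀ ⟨hx, (ht : 0 < q.2)⟩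
    have hbound := abs_poissonSum_le (θ := α / 2) ⟨by linarith [hα.1], by linarith [hα.2]⟩ ht hq₀
      (abs_le.mpr ⟨hx.1.le, hx.2⟩)
    rw [norm_mul, norm_mul, norm_of_nonneg (by positivity), norm_eq_abs, norm_eq_abs,
      mul_left_comm, mul_assoc]
    refine mul_le_mul_of_nonneg_left ?_ (by positivity)
    exact (mul_le_of_le_one_right (abs_nonneg _) (Real.abs_cos_le_one _)).trans hbound

theorem integral_Kker_mul_cos {α : ℝ} (hα : α ∈ Ioo (0 : ℝ) 1) {k : ℕ} (hk : k ≠ 0) :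
    ∫ x in (-π)..π, Kker α x * Real.cos (k * x) = (k : ℝ) ^ (-α) := by
  have hk_pos : (0 : ℝ) < k := by positivity
  have hunfold : ∫ x in (-π)..π, Kker α x * Real.cos (k * x) = 1 / (π * Real.Gamma α) *
      ∫ x in Ioc (-π) π, ∫ t in Ioi (0 : ℝ), t ^ (α - 1) * poissonSum t x * Real.cos (k * x) := by
    rw [intervalIntegral.integral_of_le (by linarith [pi_pos]), ← integral_const_mul]
    refine integral_congr_ae ((ae_restrict_iff' measurableSet_Ioc).mpr ?_)
    filter_upwards [Measure.ae_ne volume 0] with x hx₀ hx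
    have hcos : Real.cos x ≠ 1 := fun h => hx₀ ((Real.cos_eq_one_iff_of_lt_of_lt
      (by linarith [hx.1, pi_pos]) (by linarith [hx.2, pi_pos])).mp h)
    rw [Kker_of_not_exists (exists_eq_two_pi_mul_iff.not.mpr hcos), integral_mul_const, mul_assoc]
  have hinner (t : ℝ) (ht : t ∈ Ioi 0) :
      ∫ x in Ioc (-π) π, t ^ (α - 1) * poissonSum t x * Real.cos (k * x) =
        π * (t ^ (α - 1) * Real.exp (-(k * t))) := by
    simp only [mul_assoc]
    rw [integral_const_mul, ← intervalIntegral.integral_of_le (by linarith [pi_pos]),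
      integral_poissonSum_mul_cos ht hk]
    ring
  have hΓ := Real.Gamma_pos_of_pos hα.1
  rw [hunfold, integral_integral_swap (integrable_rpow_mul_poissonSum_mul_cos hα k),
    setIntegral_congr_fun measurableSet_Ioi hinner, integral_const_mul,
    Real.integral_rpow_mul_exp_neg_mul_Ioi hα.1 hk_pos, one_div, one_div, Real.inv_rpow hk_pos.le,
    ← Real.rpow_neg hk_pos.le]
  field_simp

section Convolution

variable {w : ℝ → ℝ}

theorem integral_comp_sub_right_of_periodic {f : ℝ → ℝ} (hf : Function.Periodic f (2 * π))
    (y : ℝ) : ∫ x in (-π)..π, f (x - y) = ∫ x in (-π)..π, f x := by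
  have hshift := hf.intervalIntegral_add_eq (-π - y) (-π)
  rw [intervalIntegral.integral_comp_sub_right f y]
  convert! hshift using 2 <;> ring

theorem integral_comp_sub_left_of_periodic {f : ℝ → ℝ} (hf : Function.Periodic f (2 * π))
    (x : ℝ) : ∫ z in (-π)..π, f (x - z) = ∫ z in (-π)..π, f z := by
  have hshift := hf.intervalIntegral_add_eq (x - π) (-π)
  rw [intervalIntegral.integral_comp_sub_left f x]
  convert! hshift using 2 <;> ring

theorem integral_convolution_comm_of_periodic {φ : ℝ → ℝ} (hw : Function.Periodic w (2 * π))
    (hφ : Function.Periodic φ (2 * π)) (x : ℝ) :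
    ∫ y in (-π)..π, w (x - y) * φ y = ∫ z in (-π)..π, w z * φ (x - z) := by
  have hper : Function.Periodic (fun y => w (x - y) * φ y) (2 * π) := fun y => by
    simp only [hφ y, sub_add_eq_sub_sub, hw.sub_eq]
  simpa using (integral_comp_sub_left_of_periodic hper x).symm

theorem integral_mul_sin_of_even (hw : Function.Even w) (k : ℝ) :
    ∫ x in (-π)..π, w x * Real.sin (k * x) = 0 := by
  have hneg := intervalIntegral.integral_comp_neg (a := -π) (b := π)
    (fun x => w x * Real.sin (k * x))
  simp only [hw _, mul_neg, Real.sin_neg, intervalIntegral.integral_neg, neg_neg] at hneg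
  linarith

theorem integral_comp_sub_mul_cos (hper : Function.Periodic w (2 * π)) (heven : Function.Even w)
    (hw : IntervalIntegrable w volume (-π) π) (k : ℕ) (y : ℝ) :
    ∫ x in (-π)..π, w (x - y) * Real.cos (k * x) =
      (∫ z in (-π)..π, w z * Real.cos (k * z)) * Real.cos (k * y) := by
  have hshift : Function.Periodic (fun z => w z * Real.cos (k * (z + y))) (2 * π) := fun z => by
    simp only [hper z]
    rw [show (k : ℝ) * (z + 2 * π + y) = k * (z + y) + k * (2 * π) by ring,
      Real.cos_add_nat_mul_two_pi]
  have hcos : IntervalIntegrable (fun z => w z * Real.cos (k * z)) volume (-π) π :=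
    hw.mul_continuousOn (by fun_prop)
  have hsin : IntervalIntegrable (fun z => w z * Real.sin (k * z)) volume (-π) π :=
    hw.mul_continuousOn (by fun_prop)
  calc ∫ x in (-π)..π, w (x - y) * Real.cos (k * x)
      = ∫ z in (-π)..π, w z * Real.cos (k * (z + y)) := by
        simpa using integral_comp_sub_right_of_periodic hshift y
    _ = ∫ z in (-π)..π, (w z * Real.cos (k * z) * Real.cos (k * y) -
          w z * Real.sin (k * z) * Real.sin (k * y)) := by
        congr! 2 with z
        rw [mul_add, Real.cos_add]
        ring
    _ = (∫ z in (-π)..π, w z * Real.cos (k * z)) * Real.cos (k * y) := by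
        rw [intervalIntegral.integral_sub (hcos.mul_const _) (hsin.mul_const _),
          intervalIntegral.integral_mul_const, intervalIntegral.integral_mul_const,
          integral_mul_sin_of_even heven, zero_mul, sub_zero]

theorem integrable_comp_sub_mul {φ : ℝ → ℝ}
    (hw : IntervalIntegrable w volume (-(2 * π)) (2 * π))
    (hφ : IntervalIntegrable φ volume (-π) π) :
    Integrable (fun q : ℝ × ℝ => w (q.1 - q.2) * φ q.2)
      ((volume.restrict (Ioc (-π) π)).prod (volume.restrict (Ioc (-π) π))) := by
  rw [intervalIntegrable_iff_integrableOn_Ioc_of_le (by linarith [pi_pos])] at hw hφ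
  have hconv := (hφ.integrable_indicator measurableSet_Ioc).convolution_integrand
    (ContinuousLinearMap.mul ℝ ℝ) (hw.integrable_indicator measurableSet_Ioc)
  rw [Measure.prod_restrict]
  refine hconv.integrableOn.congr_fun (fun q hq => ?_) (measurableSet_Ioc.prod measurableSet_Ioc)
  obtain ⟨⟨h₁, h₂⟩, h₃, h₄⟩ := hq
  have hmem : q.1 - q.2 ∈ Ioc (-(2 * π)) (2 * π) := ⟨by linarith, by linarith⟩
  simp only [ContinuousLinearMap.mul_apply', indicator_of_mem hmem,
    indicator_of_mem (show q.2 ∈ Ioc (-π) π from ⟨h₃, h₄⟩)]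
  ring

theorem integral_convolution_mul_cos {φ : ℝ → ℝ} (hper : Function.Periodic w (2 * π))
    (heven : Function.Even w) (hw : ∀ a b, IntervalIntegrable w volume a b)
    (hφ : IntervalIntegrable φ volume (-π) π) (k : ℕ) :
    ∫ x in (-π)..π, (∫ y in (-π)..π, w (x - y) * φ y) * Real.cos (k * x) =
      (∫ z in (-π)..π, w z * Real.cos (k * z)) * ∫ y in (-π)..π, φ y * Real.cos (k * y) := by
  have hle : -π ≤ π := by linarith [pi_pos]
  have hint : Integrable (fun q : ℝ × ℝ => w (q.1 - q.2) * φ q.2 * Real.cos (k * q.1))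
      ((volume.restrict (Ioc (-π) π)).prod (volume.restrict (Ioc (-π) π))) :=
    (integrable_comp_sub_mul (hw _ _) hφ).mul_bdd (c := 1) (by fun_prop)
      (.of_forall fun q => Real.abs_cos_le_one _)
  simp only [← intervalIntegral.integral_mul_const, ← intervalIntegral.integral_const_mul]
  simp only [intervalIntegral.integral_of_le hle]
  rw [integral_integral_swap hint]
  simp only [← intervalIntegral.integral_of_le hle]
  refine intervalIntegral.integral_congr fun y _ => ?_
  calc ∫ x in (-π)..π, w (x - y) * φ y * Real.cos (k * x)
      = (∫ x in (-π)..π, w (x - y) * Real.cos (k * x)) * φ y := by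
        rw [← intervalIntegral.integral_mul_const]
        simp only [mul_right_comm]
    _ = _ := by
        rw [integral_comp_sub_mul_cos hper heven (hw _ _), intervalIntegral.integral_mul_const,
          mul_assoc, mul_comm (Real.cos _)]

end Convolution

theorem integral_sub_const_mul_cos {φ : ℝ → ℝ} (hφ : IntervalIntegrable φ volume (-π) π) (d : ℝ) :
    ∫ x in (-π)..π, (φ x - d) * Real.cos x = ∫ x in (-π)..π, φ x * Real.cos x := by
  simp only [sub_mul]
  rw [intervalIntegral.integral_sub (hφ.mul_continuousOn (by fun_prop))
    (Continuous.intervalIntegrable (by fun_prop) _ _)]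
  simp

/-! ### Lower bounds for the speed -/

/-- The profiles in question: continuous even `2π`-periodic functions that increase from a
trough at `-π` to a crest at `0`. -/
structure IsBell (φ : ℝ → ℝ) : Prop where
  continuous : Continuous φ
  periodic : Function.Periodic φ (2 * π)
  even : Function.Even φ
  monotoneOn : MonotoneOn φ (Icc (-π) 0)

theorem monotoneOn_Icc_of_monotoneOn_Ioo {φ : ℝ → ℝ} {a b : ℝ} (hab : a < b)
    (hφ : ContinuousOn φ (Icc a b)) (hmono : MonotoneOn φ (Ioo a b)) : MonotoneOn φ (Icc a b) := by
  have hcluster {x : ℝ} {s : Set ℝ} (hx : x ∈ Icc a b) (hs : Ioo a b ⊆ s) : ClusterPt x (𝓟 s) :=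
    mem_closure_iff_clusterPt.mp (closure_mono hs (closure_Ioo hab.ne ▸ hx))
  have hIco : MonotoneOn φ (Ico a b) := by
    rw [← Ioo_insert_left hab]
    exact hmono.insert_of_continuousWithinAt (hcluster (left_mem_Icc.mpr hab.le) subset_rfl)
      ((hφ a (left_mem_Icc.mpr hab.le)).mono Ioo_subset_Icc_self)
  rw [← Ico_insert_right hab.le]
  exact hIco.insert_of_continuousWithinAt (hcluster (right_mem_Icc.mpr hab.le) Ioo_subset_Ico_self)
    ((hφ b (right_mem_Icc.mpr hab.le)).mono Ico_subset_Icc_self)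

namespace IsBell

variable {φ : ℝ → ℝ}

theorem exists_mem_Icc_eq (h : IsBell φ) (x : ℝ) : ∃ y ∈ Icc (-π) 0, φ x = φ y := by
  obtain ⟨y, ⟨hy₁, hy₂⟩, hxy⟩ := h.periodic.exists_mem_Ico (by positivity) x (-π)
  refine ⟨-|y|, ⟨neg_le_neg (abs_le.mpr ⟨hy₁, by linarith⟩), by simp⟩, ?_⟩
  rw [hxy, h.even]
  rcases abs_choice y with hy | hy <;> simp [hy, h.even y]

theorem mem_Icc (h : IsBell φ) (x : ℝ) : φ x ∈ Icc (φ (-π)) (φ 0) := by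
  obtain ⟨y, hy, hxy⟩ := h.exists_mem_Icc_eq x
  have hπ : -π ≤ 0 := by linarith [pi_pos]
  exact hxy ▸ ⟨h.monotoneOn (left_mem_Icc.mpr hπ) hy hy.1,
    h.monotoneOn hy (right_mem_Icc.mpr hπ) hy.2⟩

theorem comp {g : ℝ → ℝ} (h : IsBell φ) (hg : Continuous g)
    (hmono : MonotoneOn g (Icc (φ (-π)) (φ 0))) : IsBell (fun x => g (φ x)) where
  continuous := hg.comp h.continuous
  periodic x := congrArg g (h.periodic x)
  even x := congrArg g (h.even x)
  monotoneOn _ hx _ hy hxy := hmono (h.mem_Icc _) (h.mem_Icc _) (h.monotoneOn hx hy hxy)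

theorem sub_mul_cos_nonneg (h : IsBell φ) {x : ℝ} (hx : x ∈ Icc (-π) π) :
    0 ≤ (φ x - φ (-(π / 2))) * Real.cos x := by
  have hπ := pi_pos
  wlog hx₀ : x ≤ 0 generalizing x
  · simpa [h.even x] using this (x := -x) ⟨by linarith [hx.2], by linarith [hx.1]⟩ (by linarith)
  have hmid : -(π / 2) ∈ Icc (-π) 0 := ⟨by linarith, by linarith⟩
  rcases le_total x (-(π / 2)) with hle | hle
  · have hcos : Real.cos x ≤ 0 := Real.cos_neg x ▸
      Real.cos_nonpos_of_pi_div_two_le_of_le (by linarith) (by linarith [hx.1])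
    exact mul_nonneg_of_nonpos_of_nonpos
      (sub_nonpos.mpr (h.monotoneOn ⟨hx.1, hx₀⟩ hmid hle)) hcos
  · exact mul_nonneg (sub_nonneg.mpr (h.monotoneOn hmid ⟨hx.1, hx₀⟩ hle))
      (Real.cos_nonneg_of_mem_Icc ⟨by linarith, by linarith⟩)

theorem integral_mul_cos_nonneg (h : IsBell φ) : 0 ≤ ∫ x in (-π)..π, φ x * Real.cos x := by
  rw [← integral_sub_const_mul_cos (h.continuous.intervalIntegrable _ _) (φ (-(π / 2)))]
  exact intervalIntegral.integral_nonneg (by linarith [pi_pos])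
    fun x hx => h.sub_mul_cos_nonneg hx

theorem integral_mul_cos_pos (h : IsBell φ) (hlt : φ (-π) < φ 0) :
    0 < ∫ x in (-π)..π, φ x * Real.cos x := by
  have hπ := pi_pos
  have hφ := h.continuous
  rw [← integral_sub_const_mul_cos (h.continuous.intervalIntegrable _ _) (φ (-(π / 2)))]
  refine intervalIntegral.integral_pos (by linarith) (by fun_prop)
    (fun x hx => h.sub_mul_cos_nonneg ⟨hx.1.le, hx.2⟩) ?_
  rcases lt_or_ge (φ (-(π / 2))) (φ 0) with hmid | hmid
  · exact ⟨0, ⟨by linarith, hπ.le⟩, by simpa using hmid⟩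
  · exact ⟨-π, ⟨le_rfl, by linarith⟩, by simpa using hlt.trans_le hmid⟩

theorem trough_neg (h : IsBell φ) (hmean : ∫ y in (-π)..π, φ y = 0) (hne : ∃ x, φ x ≠ 0) :
    φ (-π) < 0 := by
  by_contra! hnonneg
  obtain ⟨x, hx⟩ := hne
  obtain ⟨y, hy, hxy⟩ := h.exists_mem_Icc_eq x
  refine (intervalIntegral.integral_pos (by linarith [pi_pos]) h.continuous.continuousOn
    (fun z _ => hnonneg.trans (h.mem_Icc z).1)
    ⟨y, ⟨hy.1, by linarith [hy.2, pi_pos]⟩, ?_⟩).ne' hmean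
  exact (hnonneg.trans (h.mem_Icc y).1).lt_of_ne (hxy ▸ hx).symm

theorem crest_nonneg (h : IsBell φ) (hmean : ∫ y in (-π)..π, φ y = 0) : 0 ≤ φ 0 := by
  have hle : ∫ y in (-π)..π, φ y ≤ ∫ _ in (-π)..π, φ 0 :=
    intervalIntegral.integral_mono_on (by linarith [pi_pos])
      (h.continuous.intervalIntegrable _ _) (by simp) fun y _ => (h.mem_Icc y).2
  rw [hmean, intervalIntegral.integral_const, smul_eq_mul] at hle
  exact nonneg_of_mul_nonneg_right hle (by linarith [pi_pos])

theorem abs_le_two_mul_crest_sub (h : IsBell φ) (hmean : ∫ y in (-π)..π, φ y = 0) (x : ℝ) :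
    |φ x| ≤ 2 * φ 0 - φ x := by
  have := h.crest_nonneg hmean
  exact abs_le.mpr ⟨by linarith, by linarith [(h.mem_Icc x).2]⟩

theorem integral_abs_le (h : IsBell φ) (hmean : ∫ y in (-π)..π, φ y = 0) :
    ∫ y in (-π)..π, |φ y| ≤ 4 * π * φ 0 := by
  have hφ := h.continuous.intervalIntegrable (μ := volume) (-π) π
  calc ∫ y in (-π)..π, |φ y| ≤ ∫ y in (-π)..π, (2 * φ 0 - φ y) :=
        intervalIntegral.integral_mono_on (by linarith [pi_pos]) hφ.abs
          (intervalIntegrable_const.sub hφ) fun y _ => h.abs_le_two_mul_crest_sub hmean y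
    _ = 4 * π * φ 0 := by
        rw [intervalIntegral.integral_sub intervalIntegrable_const hφ, hmean,
          intervalIntegral.integral_const, smul_eq_mul]
        ring

end IsBell

theorem exists_abs_integral_mul_le {X : Type*} [TopologicalSpace X] [NormalSpace X]
    [MeasurableSpace X] [BorelSpace X] {μ : Measure X} [μ.WeaklyRegular] {w : X → ℝ}
    (hw : Integrable w μ) {ε : ℝ} (hε : 0 < ε) :
    ∃ D : ℝ, 0 ≤ D ∧ ∀ (m : ℝ) (f : X → ℝ), 0 ≤ m → Integrable f μ → (∀ x, |f x| ≤ m) →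
      |∫ x, w x * f x ∂μ| ≤ ε * m + D * ∫ x, |f x| ∂μ := by
  obtain ⟨g, hg, hgi⟩ := hw.exists_boundedContinuous_integral_sub_le hε
  refine ⟨‖g‖, norm_nonneg g, fun m f hm hf hfm => ?_⟩
  have hbound : Integrable (fun x => ‖g‖ * |f x|) μ := hf.abs.const_mul _
  have hdiff : Integrable (fun x => ‖w x - g x‖ * m) μ := (hw.sub hgi).norm.mul_const m
  calc |∫ x, w x * f x ∂μ| ≤ ∫ x, (‖w x - g x‖ * m + ‖g‖ * |f x|) ∂μ := by
        rw [← Real.norm_eq_abs]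
        refine norm_integral_le_of_norm_le (hdiff.add hbound) (.of_forall fun x => ?_)
        calc ‖w x * f x‖ = ‖(w x - g x) * f x + g x * f x‖ := by ring_nf
          _ ≤ ‖w x - g x‖ * ‖f x‖ + ‖g x‖ * ‖f x‖ := by
            simpa only [norm_mul] using norm_add_le ((w x - g x) * f x) (g x * f x)
          _ ≤ ‖w x - g x‖ * m + ‖g‖ * |f x| := add_le_add
            (mul_le_mul_of_nonneg_left (hfm x) (norm_nonneg _))
            (mul_le_mul_of_nonneg_right (g.norm_coe_le_norm x) (norm_nonneg _))
    _ = (∫ x, ‖w x - g x‖ ∂μ) * m + ‖g‖ * ∫ x, |f x| ∂μ := by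
        rw [integral_add hdiff hbound, integral_mul_const, integral_const_mul]
    _ ≤ ε * m + ‖g‖ * ∫ x, |f x| ∂μ := by
        gcongr

theorem continuous_nSgn {p : ℝ} (hp : 1 ≤ p) : Continuous (nSgn p) :=
  continuous_id.mul (continuous_abs.rpow_const fun _ => Or.inr (by linarith))

theorem monotone_nSgn {p : ℝ} (hp : 1 ≤ p) : Monotone (nSgn p) := by
  refine monotone_of_odd_of_monotoneOn_nonneg (fun x => by simp [nSgn]) fun x hx y hy hxy => ?_
  simp only [mem_Ici] at hx hy
  simp only [nSgn, abs_of_nonneg hx, abs_of_nonneg hy]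
  gcongr

theorem continuous_nAbs {p : ℝ} (hp : 0 ≤ p) : Continuous (nAbs p) :=
  continuous_abs.rpow_const fun _ => Or.inr hp

theorem hasDerivAt_nAbs {p : ℝ} (hp : 1 < p) (x : ℝ) : HasDerivAt (nAbs p) (nAbs' p x) x :=
  (hasDerivAt_abs_rpow x hp).congr_deriv (mul_right_comm _ _ _)

theorem nAbs'_neg (p x : ℝ) : nAbs' p (-x) = -nAbs' p x := by
  simp [nAbs']

theorem nAbs'_of_nonneg {p x : ℝ} (hp : p ≠ 1) (hx : 0 ≤ x) : nAbs' p x = p * x ^ (p - 1) := by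
  rcases hx.eq_or_lt with rfl | hx
  · simp [nAbs', Real.zero_rpow (sub_ne_zero.mpr hp)]
  · rw [nAbs', abs_of_pos hx, mul_assoc, ← Real.rpow_one_add' hx.le (by grind)]
    ring_nf

theorem contDiffAt_nAbs {n : ℕ∞} {p x : ℝ} (hx : x ≠ 0) : ContDiffAt ℝ n (nAbs p) x :=
  (contDiffAt_abs hx).rpow_const_of_ne (abs_ne_zero.mpr hx)

theorem monotoneOn_mul_add_nAbs {p m : ℝ} (hp : 1 < p) (hm : 0 ≤ m) :
    MonotoneOn (fun x => p * m ^ (p - 1) * x + nAbs p x) (Ici (-m)) := by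
  have hderiv (x : ℝ) : HasDerivAt (fun x => p * m ^ (p - 1) * x + nAbs p x)
      (p * m ^ (p - 1) + nAbs' p x) x := by
    simpa using ((hasDerivAt_id x).const_mul (p * m ^ (p - 1))).fun_add (hasDerivAt_nAbs hp x)
  refine monotoneOn_of_deriv_nonneg (convex_Ici _)
    (fun x _ => (hderiv x).continuousAt.continuousWithinAt)
    (fun x _ => (hderiv x).differentiableAt.differentiableWithinAt) fun x hx => ?_
  rw [interior_Ici, mem_Ioi] at hx
  rw [(hderiv x).deriv]
  rcases le_total 0 x with hx₀ | hx₀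
  · rw [nAbs'_of_nonneg hp.ne' hx₀]
    positivity
  · have hle : (-x) ^ (p - 1) ≤ m ^ (p - 1) := by
      gcongr <;> linarith
    have hneg : nAbs' p x = -(p * (-x) ^ (p - 1)) := by
      rw [← nAbs'_of_nonneg hp.ne' (neg_nonneg.mpr hx₀), nAbs'_neg, neg_neg]
    rw [hneg, ← sub_eq_add_neg, ← mul_sub]
    exact mul_nonneg (by linarith) (sub_nonneg.mpr hle)

namespace IsSteadySolution

variable {α c : ℝ} {n φ : ℝ → ℝ}

theorem integral_mul_cos (h : IsSteadySolution α c n φ) (hα : α ∈ Ioo (0 : ℝ) 1)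
    (hn : Continuous n) {k : ℕ} (hk : k ≠ 0) :
    (k : ℝ) ^ (-α) * ∫ x in (-π)..π, φ x * Real.cos (k * x) =
      c * (∫ x in (-π)..π, φ x * Real.cos (k * x)) -
        ∫ x in (-π)..π, n (φ x) * Real.cos (k * x) := by
  obtain ⟨hφ, -, -, heq⟩ := h
  have hzero : ∫ x in (-π)..π, Real.cos (k * x) = 0 := by
    exact_mod_cast integral_cos_int_mul (m := k) (by exact_mod_cast hk)
  rw [← integral_Kker_mul_cos hα hk, ← integral_convolution_mul_cos (Kker_periodic α)
    (Kker_neg α) (intervalIntegrable_Kker hα) (hφ.intervalIntegrable _ _)]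
  simp only [heq, add_mul, sub_mul, mul_assoc]
  rw [intervalIntegral.integral_add (Continuous.intervalIntegrable (by fun_prop) _ _)
    (Continuous.intervalIntegrable (by fun_prop) _ _), intervalIntegral.integral_sub
    (Continuous.intervalIntegrable (by fun_prop) _ _)
    (Continuous.intervalIntegrable (by fun_prop) _ _)]
  simp [intervalIntegral.integral_const_mul, hzero]

theorem one_le_add_of_monotoneOn (h : IsSteadySolution α c n φ) (hα : α ∈ Ioo (0 : ℝ) 1)
    (hbell : IsBell φ) (hne : ∃ x, φ x ≠ 0) (hn : Continuous n) {κ : ℝ}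
    (hmono : MonotoneOn (fun y => κ * y + n y) (Icc (φ (-π)) (φ 0))) : 1 ≤ c + κ := by
  have hφ := hbell.continuous
  have hmean : ∫ y in (-π)..π, φ y = 0 := h.2.2.1
  have hpos : 0 < ∫ x in (-π)..π, φ x * Real.cos x :=
    hbell.integral_mul_cos_pos ((hbell.trough_neg hmean hne).trans_le (hbell.crest_nonneg hmean))
  have hnonneg : 0 ≤ κ * (∫ x in (-π)..π, φ x * Real.cos x) +
      ∫ x in (-π)..π, n (φ x) * Real.cos x := by
    have := (hbell.comp (by fun_prop) hmono).integral_mul_cos_nonneg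
    simp only [add_mul, mul_assoc] at this
    rwa [intervalIntegral.integral_add (Continuous.intervalIntegrable (by fun_prop) _ _)
      (Continuous.intervalIntegrable (by fun_prop) _ _),
      intervalIntegral.integral_const_mul] at this
  have heq := h.integral_mul_cos hα hn one_ne_zero
  simp only [Nat.cast_one, one_mul, Real.one_rpow] at heq
  by_contra! hlt
  nlinarith

theorem one_le_of_nSgn {p : ℝ} (h : IsSteadySolution α c (nSgn p) φ) (hα : α ∈ Ioo (0 : ℝ) 1)
    (hp : 1 ≤ p) (hbell : IsBell φ) (hne : ∃ x, φ x ≠ 0) : 1 ≤ c := by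
  simpa using h.one_le_add_of_monotoneOn hα hbell hne (continuous_nSgn hp) (κ := 0)
    (by simpa using (monotone_nSgn hp).monotoneOn _)

theorem one_le_sub_nAbs' {p : ℝ} (h : IsSteadySolution α c (nAbs p) φ)
    (hα : α ∈ Ioo (0 : ℝ) 1) (hp : 1 < p) (hbell : IsBell φ) (hne : ∃ x, φ x ≠ 0) :
    1 ≤ c - nAbs' p (φ (-π)) := by
  have htrough : 0 ≤ -φ (-π) := by linarith [hbell.trough_neg h.2.2.1 hne]
  rw [sub_eq_add_neg, ← nAbs'_neg, nAbs'_of_nonneg hp.ne' htrough]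
  refine h.one_le_add_of_monotoneOn hα hbell hne (continuous_nAbs (by linarith))
    ((monotoneOn_mul_add_nAbs hp htrough).mono ?_)
  simpa using Icc_subset_Ici_self

end IsSteadySolution

theorem rpow_le_of_trough_le_sum {p m M s D : ℝ} (hp : 1 < p) (hs : 0 < s) (hm : 0 < m)
    (hM : M ≤ s ^ (p - 1)⁻¹ / 8) (hDM : D * M ≤ s * s ^ (p - 1)⁻¹ / 4)
    (hle : m ^ p ≤ 2 * m ^ (p - 1) * M + s / 4 * m + D * M) : m ^ (p - 1) ≤ s := by
  by_contra! hlt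
  have hp₀ : 0 < p - 1 := by linarith
  have hroot : s ^ (p - 1)⁻¹ < m := by
    rwa [Real.rpow_inv_lt_iff_of_pos hs.le hm.le hp₀]
  have hsplit : m ^ p = m ^ (p - 1) * m := by
    rw [← Real.rpow_add_one hm.ne', sub_add_cancel]
  have hsm : s * m < m ^ (p - 1) * m := mul_lt_mul_of_pos_right hlt hm
  have hsm₀ : 0 < s * m := mul_pos hs hm
  have hcrest : m ^ (p - 1) * M ≤ m ^ (p - 1) * (m / 8) := by
    gcongr
    linarith
  have hrootm : s * s ^ (p - 1)⁻¹ ≤ s * m := by gcongr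
  linarith

theorem lt_of_nAbs'_lt {p x r : ℝ} (hp : 1 < p) (hx : 0 ≤ x) (hr : 0 ≤ r)
    (hlt : nAbs' p x < p * r ^ (p - 1)) : x < r := by
  rw [nAbs'_of_nonneg hp.ne' hx] at hlt
  exact (Real.rpow_lt_rpow_iff hx hr (by linarith)).mp
    (lt_of_mul_lt_mul_left hlt (by linarith))

namespace IsBell

variable {φ : ℝ → ℝ}

theorem mean_nAbs_le {p m : ℝ} (hbell : IsBell φ) (hp : 1 < p)
    (hmean : ∫ y in (-π)..π, φ y = 0) (hm : ∀ x, |φ x| ≤ m) :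
    1 / (2 * π) * ∫ y in (-π)..π, nAbs p (φ y) ≤ 2 * m ^ (p - 1) * φ 0 := by
  have hφ := hbell.continuous
  have hpoint (y : ℝ) : nAbs p (φ y) ≤ m ^ (p - 1) * |φ y| := by
    calc nAbs p (φ y) = |φ y| ^ (p - 1) * |φ y| := by
          rw [nAbs, ← Real.rpow_add_one' (abs_nonneg _) (by linarith), sub_add_cancel]
      _ ≤ m ^ (p - 1) * |φ y| := by
          have := hm y
          gcongr
  have hint : ∫ y in (-π)..π, nAbs p (φ y) ≤ m ^ (p - 1) * (4 * π * φ 0) := by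
    refine (intervalIntegral.integral_mono_on (by linarith [pi_pos])
      (((continuous_nAbs (by linarith)).comp hφ).intervalIntegrable _ _)
      ((hφ.abs.const_mul _).intervalIntegrable _ _) fun y _ => hpoint y).trans ?_
    rw [intervalIntegral.integral_const_mul]
    have hm₀ := (abs_nonneg (φ 0)).trans (hm 0)
    gcongr
    exact hbell.integral_abs_le hmean
  rw [one_div_mul_eq_div, div_le_iff₀ (by positivity)]
  linarith

theorem abs_integral_Kker_mul_le {α m ε D : ℝ} (hbell : IsBell φ)
    (hmean : ∫ y in (-π)..π, φ y = 0) (hm : ∀ x, |φ x| ≤ m) (hD : 0 ≤ D)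
    (hK : ∀ (m : ℝ) (f : ℝ → ℝ), 0 ≤ m → IntegrableOn f (Ioc (-π) π) → (∀ x, |f x| ≤ m) →
      |∫ z in Ioc (-π) π, Kker α z * f z| ≤ ε * m + D * ∫ z in Ioc (-π) π, |f z|) (x : ℝ) :
    |∫ y in (-π)..π, Kker α (x - y) * φ y| ≤ ε * m + 4 * π * D * φ 0 := by
  have hφ := hbell.continuous
  have habs : ∫ z in (-π)..π, |φ (x - z)| = ∫ y in (-π)..π, |φ y| :=
    integral_comp_sub_left_of_periodic (f := fun z => |φ z|)
      (fun y => congrArg abs (hbell.periodic y)) x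
  have hle := hK m (fun z => φ (x - z)) ((abs_nonneg _).trans (hm 0))
    (Continuous.integrableOn_Ioc (by fun_prop)) fun z => hm _
  rw [integral_convolution_comm_of_periodic (Kker_periodic α) hbell.periodic]
  simp only [← intervalIntegral.integral_of_le (show -π ≤ π by linarith [pi_pos]),
    habs] at hle
  linarith [mul_le_mul_of_nonneg_left (hbell.integral_abs_le hmean) hD]

end IsBell

namespace IsSteadySolution

variable {α p : ℝ}

theorem exists_crest_forall_trough_rpow_le (hα : α ∈ Ioo (0 : ℝ) 1) (hp : 1 < p) {s : ℝ}
    (hs : 0 < s) : ∃ r > 0, ∀ (c : ℝ) (φ : ℝ → ℝ), IsSteadySolution α c (nAbs p) φ → IsBell φ →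
      (∃ x, φ x ≠ 0) → 0 ≤ c → φ 0 < r → (-φ (-π)) ^ (p - 1) ≤ s := by
  have hπ : -π ≤ π := by linarith [pi_pos]
  obtain ⟨D, hD, hK⟩ := exists_abs_integral_mul_le
    ((intervalIntegrable_iff_integrableOn_Ioc_of_le hπ).mp (intervalIntegrable_Kker hα (-π) π))
    (show 0 < s / 4 by positivity)
  refine ⟨min (s ^ (p - 1)⁻¹ / 8) (s * s ^ (p - 1)⁻¹ / 4 / (4 * π * D + 1)), by positivity,
    fun c φ h hbell hne hc hcrest => ?_⟩
  have hmean : ∫ y in (-π)..π, φ y = 0 := h.2.2.1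
  have htrough := hbell.trough_neg hmean hne
  have hcrest₀ := hbell.crest_nonneg hmean
  obtain ⟨hcrest₁, hcrest₂⟩ := lt_min_iff.mp hcrest
  by_contra! hlt
  have hcrest_lt : φ 0 < -φ (-π) := by
    linarith [(Real.rpow_inv_lt_iff_of_pos hs.le (neg_pos.mpr htrough).le (by linarith)).mpr hlt]
  have habs (x : ℝ) : |φ x| ≤ -φ (-π) :=
    abs_le.mpr ⟨by linarith [(hbell.mem_Icc x).1], by linarith [(hbell.mem_Icc x).2]⟩
  refine hlt.not_ge (rpow_le_of_trough_le_sum hp hs (neg_pos.mpr htrough) hcrest₁.le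
    (D := 4 * π * D) ?_ ?_)
  · rw [lt_div_iff₀ (by positivity)] at hcrest₂
    linarith
  · have heq := h.2.2.2 (-π)
    have hmean_le := hbell.mean_nAbs_le hp hmean habs
    have hconv := hbell.abs_integral_Kker_mul_le hmean habs hD hK (-π)
    have hval : nAbs p (φ (-π)) = (-φ (-π)) ^ p := by rw [nAbs, abs_of_neg htrough]
    have hspeed := mul_nonneg hc (neg_nonneg.mpr htrough.le)
    linarith [neg_abs_le (∫ y in (-π)..π, Kker α (-π - y) * φ y)]

theorem exists_pos_forall_le_speed (hα : α ∈ Ioo (0 : ℝ) 1) (hp : 1 < p) :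
    ∃ δ > 0, ∀ (c : ℝ) (φ : ℝ → ℝ), IsSteadySolution α c (nAbs p) φ → IsBell φ →
      (∃ x, φ x ≠ 0) → nAbs' p (φ 0) ≤ c → δ ≤ c := by
  obtain ⟨r, hr, hsmall⟩ := exists_crest_forall_trough_rpow_le hα hp (s := 1 / (2 * p))
    (by positivity)
  refine ⟨min (p * r ^ (p - 1)) (1 / 2), by positivity, fun c φ h hbell hne hslope => ?_⟩
  have hcrest := hbell.crest_nonneg h.2.2.1
  by_contra! hlt
  obtain ⟨hlt₁, hlt₂⟩ := lt_min_iff.mp hlt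
  have hc : 0 ≤ c := by
    rw [nAbs'_of_nonneg hp.ne' hcrest] at hslope
    exact (by positivity : 0 ≤ p * φ 0 ^ (p - 1)).trans hslope
  have htrough := hsmall c φ h hbell hne hc
    (lt_of_nAbs'_lt hp hcrest hr.le (hslope.trans_lt hlt₁))
  have hgap := h.one_le_sub_nAbs' hα hp hbell hne
  rw [sub_eq_add_neg, ← nAbs'_neg,
    nAbs'_of_nonneg hp.ne' (neg_nonneg.mpr (hbell.trough_neg h.2.2.1 hne).le)] at hgap
  have hhalf : p * (-φ (-π)) ^ (p - 1) ≤ 1 / 2 := by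
    calc p * (-φ (-π)) ^ (p - 1) ≤ p * (1 / (2 * p)) := by gcongr
      _ = 1 / 2 := by field_simp
  linarith

end IsSteadySolution

/-! ### Interior regularity -/

section Superposition

variable {X : Type*} [TopologicalSpace X] [CompactSpace X]

theorem hasFDerivAt_continuousMap_comp {s s' : C(ℝ, ℝ)} (hs : ∀ y, HasDerivAt s (s' y) y)
    (u : C(X, ℝ)) : HasFDerivAt (fun v : C(X, ℝ) => s.comp v)
      (ContinuousLinearMap.mul ℝ C(X, ℝ) (s'.comp u)) u := by
  let G : C(ℝ × X, ℝ) := ⟨fun q => s' (u q.2 + q.1), by fun_prop⟩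
  rw [hasFDerivAt_iff_isLittleO_nhds_zero, Asymptotics.isLittleO_iff]
  intro ε hε
  obtain ⟨δ, hδ, hclose⟩ := Metric.continuousAt_iff.mp (G.curry.continuous.continuousAt (x := 0))
    ε hε
  filter_upwards [Metric.ball_mem_nhds 0 hδ] with v hv
  rw [ContinuousMap.norm_le _ (by positivity)]
  intro x
  have hderiv (τ : ℝ) : HasDerivAt (fun τ => s (u x + τ) - s' (u x) * τ)
      (s' (u x + τ) - s' (u x)) τ := by
    simpa using ((hs _).comp_const_add (u x) τ).fun_sub ((hasDerivAt_id τ).const_mul (s' (u x)))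
  have hbound (τ : ℝ) (hτ : τ ∈ Metric.ball 0 δ) : ‖s' (u x + τ) - s' (u x)‖ ≤ ε := by
    simpa [G, dist_eq_norm] using (ContinuousMap.dist_apply_le_dist x).trans (hclose hτ).le
  have hvx : v x ∈ Metric.ball 0 δ := by
    simpa using (v.norm_coe_le_norm x).trans_lt (by simpa using hv)
  have := (convex_ball (0 : ℝ) δ).norm_image_sub_le_of_norm_hasDerivWithin_le
    (fun τ _ => (hderiv τ).hasDerivWithinAt) hbound (Metric.mem_ball_self hδ) hvx
  calc ‖s (u x + v x) - s (u x) - s' (u x) * v x‖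
      = ‖s (u x + v x) - s' (u x) * v x - (s (u x + 0) - s' (u x) * 0)‖ := by
        congr 1
        simp only [add_zero, mul_zero, sub_zero]
        ring
    _ ≤ ε * ‖v x - 0‖ := this
    _ ≤ ε * ‖v‖ := by
      rw [sub_zero]
      gcongr
      exact v.norm_coe_le_norm x

theorem contDiff_continuousMap_comp {k : ℕ} {s : C(ℝ, ℝ)} (hs : ContDiff ℝ k s) :
    ContDiff ℝ k (fun v : C(X, ℝ) => s.comp v) := by
  induction k generalizing s with
  | zero => exact contDiff_zero.mpr s.continuous_postcomp
  | succ k ih =>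
    push_cast at hs ⊢
    obtain ⟨hdiff, -, hs'⟩ := contDiff_succ_iff_deriv.mp hs
    let s' : C(ℝ, ℝ) := ⟨deriv s, hs'.continuous⟩
    rw [contDiff_succ_iff_hasFDerivAt]
    exact ⟨_, (ContinuousLinearMap.mul ℝ C(X, ℝ)).contDiff.comp (ih (s := s') hs'),
      hasFDerivAt_continuousMap_comp fun y => (hdiff y).hasDerivAt⟩

theorem isInvertible_mul_sub {b : C(X, ℝ)} {κ : ℝ} {T : C(X, ℝ) →L[ℝ] C(X, ℝ)}
    (hb : ∀ x, κ ≤ |b x|) (hT : ‖T‖ < κ) :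
    (ContinuousLinearMap.mul ℝ C(X, ℝ) b - T).IsInvertible := by
  have hκ : 0 < κ := (norm_nonneg T).trans_lt hT
  have hne (x : X) : b x ≠ 0 := abs_pos.mp (hκ.trans_le (hb x))
  let b' : C(X, ℝ) := ⟨fun x => (b x)⁻¹, b.continuous.inv₀ hne⟩
  have hbb' : b * b' = 1 := ContinuousMap.ext fun x => mul_inv_cancel₀ (hne x)
  have hb' : ‖b'‖ ≤ κ⁻¹ := by
    rw [ContinuousMap.norm_le _ (by positivity)]
    intro x
    simpa [b'] using inv_anti₀ hκ (hb x)
  set L := ContinuousLinearMap.mul ℝ C(X, ℝ)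
  have hLL (a a' : C(X, ℝ)) (h : a * a' = 1) : L a ∘L L a' = 1 := by
    ext w : 1
    simp [L, ← mul_assoc, h]
  have hnorm : ‖L b' ∘L T‖ < 1 := by
    calc ‖L b' ∘L T‖ ≤ ‖L b'‖ * ‖T‖ := ContinuousLinearMap.opNorm_comp_le _ _
      _ ≤ κ⁻¹ * ‖T‖ := by
        gcongr
        exact (ContinuousLinearMap.opNorm_mul_apply_le ℝ C(X, ℝ) b').trans hb'
      _ < 1 := by rwa [inv_mul_lt_one₀ hκ]
  obtain ⟨u, hu⟩ := isUnit_one_sub_of_norm_lt_one (R := C(X, ℝ) →L[ℝ] C(X, ℝ)) hnorm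
  have hfactor : L b - T = L b ∘L (1 - L b' ∘L T) := by
    rw [ContinuousLinearMap.comp_sub, ← ContinuousLinearMap.comp_assoc, hLL _ _ hbb']
    rfl
  rw [hfactor, ← hu]
  exact (ContinuousLinearMap.IsInvertible.of_inverse (hLL _ _ hbb')
    (hLL _ _ (mul_comm b b' ▸ hbb'))).comp (.of_inverse u.mul_inv u.inv_mul)

theorem contDiffAt_of_comp_eventuallyEq {E : Type*} [NormedAddCommGroup E] [NormedSpace ℝ E]
    [CompleteSpace E] {a : E} {k : ℕ} (hk : k ≠ 0) {s : C(ℝ, ℝ)} (hs : ContDiff ℝ k s)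
    {T : E → C(X, ℝ) →L[ℝ] C(X, ℝ)} (hT : ContDiffAt ℝ k T a) {g : E → C(X, ℝ)}
    (hg : ContDiffAt ℝ k g a) {v : E → C(X, ℝ)} (hv : ContinuousAt v a)
    (heq : ∀ᶠ h in 𝓝 a, s.comp (v h) = T h (v h) + g h) {κ : ℝ}
    (hκ : ∀ x, κ ≤ |deriv s (v a x)|) (hTκ : ‖T a‖ < κ) : ContDiffAt ℝ k v a := by
  let F : E × C(X, ℝ) → C(X, ℝ) := fun q => s.comp q.2 - (T q.1 q.2 + g q.1)
  have hk₀ : (k : WithTop ℕ∞) ≠ 0 := by exact_mod_cast hk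
  have hF : ContDiffAt ℝ k F (a, v a) :=
    ((contDiff_continuousMap_comp hs).contDiffAt.comp _ contDiffAt_snd).sub
      (((hT.comp (a, v a) contDiffAt_fst).clm_apply contDiffAt_snd).add
        (hg.comp (a, v a) contDiffAt_fst))
  have hk₁ : (1 : WithTop ℕ∞) ≤ k := by exact_mod_cast Nat.one_le_iff_ne_zero.mpr hk
  let s' : C(ℝ, ℝ) := ⟨deriv s, hs.continuous_deriv hk₁⟩
  have hpartial : HasFDerivAt (fun u => F (a, u))
      (ContinuousLinearMap.mul ℝ C(X, ℝ) (s'.comp (v a)) - T a) (v a) :=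
    (hasFDerivAt_continuousMap_comp
      (fun y => (hs.differentiable hk₀ y).hasDerivAt) _).sub
      ((T a).hasFDerivAt (x := v a) |>.add_const (g a))
  have hinv : (fderiv ℝ F (a, v a) ∘L .inr ℝ E C(X, ℝ)).IsInvertible := by
    rw [((hF.differentiableAt hk₀).hasFDerivAt.comp (v a)
      (hasFDerivAt_prodMk_right a (v a))).unique hpartial]
    exact isInvertible_mul_sub hκ hTκ
  have hzero : ∀ᶠ h in 𝓝 a, F (h, v h) = 0 := heq.mono fun h hh => sub_eq_zero.mpr hh
  have hcurve : Tendsto (fun h => (h, v h)) (𝓝 a) (𝓝 (a, v a)) := tendsto_id.prodMk_nhds hv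
  refine (hF.contDiffAt_implicitFunction hk₀ hinv).congr_of_eventuallyEq ?_
  filter_upwards [hcurve.eventually (hF.eventually_apply_eq_iff_implicitFunction hk₀ hinv), hzero]
    with h himp hh
  exact (himp.mp (hh.trans hzero.self_of_nhds.symm)).symm

end Superposition

theorem exists_contDiff_eqOn_closedBall {E F : Type*} [NormedAddCommGroup E] [NormedSpace ℝ E]
    [HasContDiffBump E] [NormedAddCommGroup F] [NormedSpace ℝ F] {s : E → F} {a : E} {r R : ℝ}
    {n : ℕ∞} (hr : 0 < r) (hrR : r < R) (hs : ContDiffOn ℝ n s (Metric.ball a R)) :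
    ∃ g : E → F, ContDiff ℝ n g ∧ EqOn g s (Metric.closedBall a r) := by
  let b : ContDiffBump a := ⟨r, (r + R) / 2, hr, by linarith⟩
  refine ⟨fun x => b x • s x, contDiff_iff_contDiffAt.mpr fun x => ?_, fun x hx => ?_⟩
  · by_cases hx : x ∈ tsupport b
    · have hxR : x ∈ Metric.ball a R :=
        Metric.closedBall_subset_ball (by linarith : (r + R) / 2 < R) (b.tsupport_eq ▸ hx)
      exact b.contDiffAt.smul (hs.contDiffAt (Metric.isOpen_ball.mem_nhds hxR))
    · refine contDiffAt_const (c := (0 : F)) |>.congr_of_eventuallyEq ?_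
      filter_upwards [notMem_tsupport_iff_eventuallyEq.mp hx] with y hy
      simp [hy]
  · simp only [b.one_of_mem_closedBall hx, one_smul]

section Deformation

variable {η : ℝ → ℝ}

theorem exists_continuousMap_sub_eq_mul (hη : ContDiff ℝ 1 η) {B : ℝ}
    (hB : ∀ x, |deriv η x| ≤ B) :
    ∃ κ : C(ℝ × ℝ, ℝ), ∀ x z, η x - η (x - z) = κ (x, z) * z ∧ |κ (x, z)| ≤ B := by
  have _ : Continuous (deriv η) := hη.continuous_deriv_one
  refine ⟨⟨fun q => ∫ τ in (0 : ℝ)..1, deriv η (q.1 - q.2 + τ * q.2), ?_⟩, fun x z => ⟨?_, ?_⟩⟩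
  · exact intervalIntegral.continuous_parametric_intervalIntegral_of_continuous' (by fun_prop) _ _
  · have hderiv (τ : ℝ) :
        HasDerivAt (fun τ => η (x - z + τ * z)) (deriv η (x - z + τ * z) * z) τ := by
      have hline : HasDerivAt (fun τ => x - z + τ * z) z τ := by
        simpa using ((hasDerivAt_id' τ).mul_const z).const_add (x - z)
      exact (hη.differentiable one_ne_zero _).hasDerivAt.comp τ hline
    rw [ContinuousMap.coe_mk, ← intervalIntegral.integral_mul_const,
      intervalIntegral.integral_eq_sub_of_hasDerivAt (fun τ _ => hderiv τ)
        (Continuous.intervalIntegrable (by fun_prop) _ _)]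
    simp
  · simpa using intervalIntegral.norm_integral_le_of_norm_le_const (a := (0 : ℝ)) (b := 1)
      (f := fun τ => deriv η (x - z + τ * z)) fun τ _ => hB _

theorem integral_eq_integral_comp_mul_deriv_of_periodic {G ψ ψ' : ℝ → ℝ} {x : ℝ}
    (hG : Function.Periodic G (2 * π)) (hψ : ∀ y, HasDerivAt ψ (ψ' y) y) (hψ' : ∀ y, 0 ≤ ψ' y)
    (hleft : ψ (x - π) = x - π) (hright : ψ (x + π) = x + π) :
    ∫ y in -π..π, G y = ∫ z in -π..π, G (ψ (x - z)) * ψ' (x - z) := by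
  have hshift : ∫ y in -π..π, G y = ∫ y in (x - π)..(x + π), G y := by
    have := hG.intervalIntegral_add_eq (-π) (x - π)
    ring_nf at this ⊢
    exact this
  have hsubst := intervalIntegral.integral_comp_mul_deriv_of_deriv_nonneg (g := G)
    (a := x - π) (b := x + π) (fun y _ => (hψ y).continuousAt.continuousWithinAt)
    (fun y _ => hψ y) (fun y _ => hψ' y)
  rw [hshift, intervalIntegral.integral_comp_sub_left (fun y => G (ψ y) * ψ' y) x,
    sub_neg_eq_add]
  rw [hleft, hright] at hsubst
  exact hsubst.symm

theorem exists_contDiff_Kker_mul_one_add {α : ℝ} (hα : α ∈ Ioo (0 : ℝ) 1) :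
    ∃ P S : ℝ → ℝ, ContDiff ℝ (⊤ : ℕ∞) P ∧ ContDiff ℝ (⊤ : ℕ∞) S ∧
      ∀ z t, |z| ≤ π → |t| ≤ 1 / 2 →
        Kker α (z * (1 + t)) = |z| ^ (α - 1) * (P t + |z| ^ (1 - α) * S (z * (1 + t))) := by
  obtain ⟨a, S, hS, hK⟩ := exists_Kker_eq_rpow_add hα
  obtain ⟨S', hS'cd, hS'⟩ := exists_contDiff_eqOn_closedBall (s := S) (a := 0) (r := 3 / 2 * π)
    (R := 2 * π) (n := ⊤) (by positivity) (by linarith [pi_pos])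
    (by simpa [Real.ball_eq_Ioo] using hS)
  obtain ⟨P, hPcd, hP⟩ := exists_contDiff_eqOn_closedBall
    (s := fun t : ℝ => a * (1 + t) ^ (α - 1)) (a := 0) (r := 1 / 2) (R := 1) (n := ⊤)
    (by norm_num) (by norm_num) fun t ht => by
      rw [Real.ball_eq_Ioo] at ht
      have hpos : 1 + t ≠ 0 := by linarith [ht.1]
      fun_prop (disch := assumption)
  refine ⟨P, S', hPcd, hS'cd, fun z t hz ht => ?_⟩
  rcases eq_or_ne z 0 with rfl | hz₀
  · simp [Kker_zero, zero_rpow (sub_ne_zero.mpr hα.2.ne)]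
  have hpos : 0 < 1 + t := by linarith [(abs_le.mp ht).1]
  have habs : |z * (1 + t)| = |z| * (1 + t) := by rw [abs_mul, abs_of_pos hpos]
  have hle : |z * (1 + t)| ≤ 3 / 2 * π := by
    rw [habs]
    nlinarith [(abs_le.mp ht).2, abs_nonneg z]
  have hcancel : |z| ^ (α - 1) * |z| ^ (1 - α) = 1 := by
    rw [← rpow_add (abs_pos.mpr hz₀), sub_add_sub_cancel', sub_self, rpow_zero]
  rw [hK _ (mul_ne_zero hz₀ hpos.ne') (by linarith [pi_pos]), hP (by simpa using ht),
    hS' (by simpa using hle), habs, mul_rpow (abs_nonneg z) hpos.le]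
  linear_combination -S (z * (1 + t)) * hcancel

theorem exists_contDiff_deformed_Kker {α : ℝ} (hα : α ∈ Ioo (0 : ℝ) 1)
    (hη : ContDiff ℝ (⊤ : ℕ∞) η) {B : ℝ} (hB : ∀ x, |deriv η x| ≤ B) (X : Set ℝ)
    [CompactSpace X] :
    ∃ f : ℝ → C(X × Icc (-π) π, ℝ), (∀ k : ℕ, ContDiff ℝ k f) ∧
      ∀ h, |h| * B ≤ 1 / 2 → ∀ (x : X) (z : Icc (-π) π),
        |(z : ℝ)| ^ (α - 1) * f h (x, z) =
          Kker α (z + h * (η x - η (x - z))) * (1 + h * deriv η (x - z)) := by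
  obtain ⟨P, S, hP, hS, hK⟩ := exists_contDiff_Kker_mul_one_add hα
  obtain ⟨κ, hκ⟩ := exists_continuousMap_sub_eq_mul (hη.of_le (by exact_mod_cast le_top)) hB
  have hη' : Continuous (deriv η) := hη.continuous_deriv (by exact_mod_cast le_top)
  let P' : C(ℝ, ℝ) := ⟨P, hP.continuous⟩
  let S' : C(ℝ, ℝ) := ⟨S, hS.continuous⟩
  let κ' : C(X × Icc (-π) π, ℝ) := ⟨fun q => κ (q.1, q.2), by fun_prop⟩
  let z' : C(X × Icc (-π) π, ℝ) := ⟨fun q => q.2, by fun_prop⟩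
  let ρ : C(X × Icc (-π) π, ℝ) := ⟨fun q => |(q.2 : ℝ)| ^ (1 - α),
    Continuous.rpow_const (by fun_prop) fun _ => .inr (by linarith [hα.2])⟩
  let d : C(X × Icc (-π) π, ℝ) := ⟨fun q => deriv η (q.1 - q.2), by fun_prop⟩
  refine ⟨fun h => (P'.comp (h • κ') + ρ * S'.comp (z' * (1 + h • κ'))) * (1 + h • d),
    fun k => ?_, fun h hh x z => ?_⟩
  · have hP' : ContDiff ℝ k fun v : C(X × Icc (-π) π, ℝ) => P'.comp v :=
      contDiff_continuousMap_comp (hP.of_le (by exact_mod_cast le_top))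
    have hS' : ContDiff ℝ k fun v : C(X × Icc (-π) π, ℝ) => S'.comp v :=
      contDiff_continuousMap_comp (hS.of_le (by exact_mod_cast le_top))
    fun_prop
  · have hκh : |h * κ (x, z)| ≤ 1 / 2 := by
      rw [abs_mul]
      exact (mul_le_mul_of_nonneg_left (hκ x z).2 (abs_nonneg h)).trans hh
    have harg : z + h * (η x - η (x - z)) = z * (1 + h * κ (x, z)) := by
      rw [(hκ x z).1]
      ring
    rw [harg, hK z _ (abs_le.mpr z.2) hκh, mul_assoc]
    simp [P', S', κ', z', ρ, d]

end Deformation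

theorem exists_clm_eq_integral_mul {a b : ℝ} (hab : a ≤ b) {w : ℝ → ℝ}
    (hw : IntervalIntegrable w volume a b) :
    ∃ ℓ : C(Icc a b, ℝ) →L[ℝ] ℝ, ∀ g, ℓ g = ∫ z in a..b, w z * g (projIcc a b hab z) := by
  have hint (g : C(Icc a b, ℝ)) :
      IntervalIntegrable (fun z => w z * g (projIcc a b hab z)) volume a b :=
    hw.mul_continuousOn (g.continuous.comp continuous_projIcc).continuousOn
  let ℓ : C(Icc a b, ℝ) →ₗ[ℝ] ℝ :=
    { toFun g := ∫ z in a..b, w z * g (projIcc a b hab z)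
      map_add' g₁ g₂ := by
        simp only [ContinuousMap.add_apply, mul_add]
        exact intervalIntegral.integral_add (hint g₁) (hint g₂)
      map_smul' r g := by
        simp only [ContinuousMap.smul_apply, smul_eq_mul, mul_left_comm (w _),
          intervalIntegral.integral_const_mul, RingHom.id_apply] }
  refine ⟨ℓ.mkContinuous (∫ z in a..b, |w z|) fun g => ?_, fun g => rfl⟩
  rw [← intervalIntegral.integral_mul_const]
  refine intervalIntegral.norm_integral_le_of_norm_le hab (.of_forall fun z _ => ?_)
    (hw.abs.mul_const _)
  rw [norm_mul, norm_eq_abs]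
  gcongr
  exact g.norm_coe_le_norm _

theorem exists_clm_apply_eq_integral_mul {X : Type*} [TopologicalSpace X] [LocallyCompactSpace X]
    {a b : ℝ} (hab : a ≤ b) {w : ℝ → ℝ} (hw : IntervalIntegrable w volume a b) :
    ∃ Q : C(X × Icc a b, ℝ) →L[ℝ] C(X, ℝ),
      ∀ f x, Q f x = ∫ z in a..b, w z * f (x, projIcc a b hab z) := by
  obtain ⟨ℓ, hℓ⟩ := exists_clm_eq_integral_mul hab hw
  let curryL : C(X × Icc a b, ℝ) →L[ℝ] C(X, C(Icc a b, ℝ)) :=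
    { toFun := ContinuousMap.curry
      map_add' _ _ := rfl
      map_smul' _ _ := rfl
      cont := ContinuousMap.continuous_curry }
  exact ⟨ℓ.compLeftContinuous ℝ X ∘L curryL, fun f x => hℓ _⟩

theorem exists_clm_apply_eq_mul_comp {X Y : Type*} [TopologicalSpace X] [CompactSpace X]
    [TopologicalSpace Y] [CompactSpace Y] (θ : C(Y, ℝ)) (ρ : C(Y, X)) :
    ∃ E : C(X, ℝ) →L[ℝ] C(Y, ℝ), ∀ u y, E u y = θ y * u (ρ y) := by
  let compL : C(X, ℝ) →L[ℝ] C(Y, ℝ) :=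
    { toFun u := u.comp ρ
      map_add' _ _ := rfl
      map_smul' _ _ := rfl
      cont := ρ.continuous_precomp }
  exact ⟨ContinuousLinearMap.mul ℝ C(Y, ℝ) θ ∘L compL, fun u y => rfl⟩

theorem abs_integral_mul_le_of_eq_zero {w b : ℝ → ℝ} {r R M : ℝ} (hr : 0 ≤ r) (hrR : r ≤ R)
    (hw : IntervalIntegrable w volume (-r) r) (hb : ∀ z, |b z| ≤ M)
    (hb₀ : ∀ z, |z| ≤ R → r ≤ |z| → b z = 0) :
    |∫ z in -R..R, w z * b z| ≤ (∫ z in -r..r, |w z|) * M := by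
  have hrestrict : ∫ z in -R..R, w z * b z = ∫ z in -r..r, w z * b z := by
    rw [intervalIntegral.integral_of_le (by linarith),
      intervalIntegral.integral_of_le (by linarith)]
    refine setIntegral_eq_of_subset_of_forall_sdiff_eq_zero measurableSet_Ioc
      (Ioc_subset_Ioc (neg_le_neg hrR) hrR) fun z hz => ?_
    have hz' : r ≤ |z| := by
      by_contra! hlt
      exact hz.2 ⟨(abs_lt.mp hlt).1, (abs_lt.mp hlt).2.le⟩
    rw [hb₀ z (abs_le.mpr ⟨hz.1.1.le, hz.1.2⟩) hz', mul_zero]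
  rw [hrestrict, ← intervalIntegral.integral_mul_const, ← norm_eq_abs]
  refine intervalIntegral.norm_integral_le_of_norm_le (by linarith) (.of_forall fun z _ => ?_)
    (hw.abs.mul_const M)
  rw [norm_mul, norm_eq_abs]
  exact mul_le_mul_of_nonneg_left (hb z) (abs_nonneg _)

theorem tendsto_integral_abs_neg_self {w : ℝ → ℝ}
    (hw : ∀ a b, IntervalIntegrable w volume a b) :
    Tendsto (fun r => ∫ z in -r..r, |w z|) (𝓝 0) (𝓝 0) := by
  have habs (a b : ℝ) : IntervalIntegrable (fun z => |w z|) volume a b := (hw a b).abs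
  have hprim : Continuous fun r => ∫ z in (0 : ℝ)..r, |w z| :=
    intervalIntegral.continuous_primitive habs 0
  have hsub (r : ℝ) : ∫ z in -r..r, |w z| =
      (∫ z in (0 : ℝ)..r, |w z|) - ∫ z in (0 : ℝ)..-r, |w z| :=
    (intervalIntegral.integral_interval_sub_left (habs _ _) (habs _ _)).symm
  simp only [hsub]
  exact (hprim.sub (hprim.comp continuous_neg)).tendsto' 0 0 (by simp)

section LocalRegularity

variable {x₀ : ℝ} {η θ : ContDiffBump x₀} {φ : ℝ → ℝ}

theorem bump_mul_projIcc_add_one_sub_mul (hηθ : η.rOut ≤ θ.rIn)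
    (hle : x₀ - θ.rOut ≤ x₀ + θ.rOut) (h y : ℝ) :
    θ y * φ (projIcc _ _ hle y + h * η (projIcc _ _ hle y)) + (1 - θ y) * φ y =
      φ (y + h * η y) := by
  rcases le_total θ.rIn (dist y x₀) with hout | hin
  · have hηy : η y = 0 := η.zero_of_le_dist (hηθ.trans hout)
    rcases le_total θ.rOut (dist y x₀) with hout' | hin'
    · simp [hηy, θ.zero_of_le_dist hout']
    · rw [dist_eq, abs_le] at hin'
      rw [projIcc_of_mem hle ⟨by linarith, by linarith⟩]
      simp only [hηy, mul_zero, add_zero]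
      ring
  · rw [θ.one_of_mem_closedBall hin]
    have hmem := hin.trans θ.rIn_lt_rOut.le
    rw [dist_eq, abs_le] at hmem
    rw [projIcc_of_mem hle ⟨by linarith, by linarith⟩]
    ring

theorem integral_Kker_comp_deformation (α : ℝ) (hφ : Function.Periodic φ (2 * π))
    {η : ℝ → ℝ} (hη : ContDiff ℝ 1 η) {B h x : ℝ} (hB : ∀ y, |deriv η y| ≤ B)
    (hh : |h| * B ≤ 1 / 2) (hleft : η (x - π) = 0) (hright : η (x + π) = 0) :
    ∫ y in -π..π, Kker α (x + h * η x - y) * φ y =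
      ∫ z in -π..π, Kker α (z + h * (η x - η (x - z))) * (1 + h * deriv η (x - z)) *
        φ (x - z + h * η (x - z)) := by
  have hperiodic : Function.Periodic (fun y => Kker α (x + h * η x - y) * φ y) (2 * π) := by
    intro y
    simp only [hφ y, ← sub_sub, (Kker_periodic α).sub_eq]
  have hderiv (y : ℝ) : HasDerivAt (fun y => y + h * η y) (1 + h * deriv η y) y :=
    (hasDerivAt_id' y).fun_add
      ((hη.differentiable one_ne_zero y).hasDerivAt.const_mul h)
  have hnonneg (y : ℝ) : 0 ≤ 1 + h * deriv η y := by
    have : |h * deriv η y| ≤ 1 / 2 := by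
      rw [abs_mul]
      exact (mul_le_mul_of_nonneg_left (hB y) (abs_nonneg h)).trans hh
    linarith [(abs_le.mp this).1]
  rw [integral_eq_integral_comp_mul_deriv_of_periodic (x := x) hperiodic hderiv hnonneg
    (by simp [hleft]) (by simp [hright])]
  refine intervalIntegral.integral_congr fun z _ => ?_
  ring_nf

theorem exists_deformed_integral_operator {α : ℝ} (hα : α ∈ Ioo (0 : ℝ) 1) {η : ℝ → ℝ}
    (hη : ContDiff ℝ (⊤ : ℕ∞) η) {B : ℝ} (hB : ∀ x, |deriv η x| ≤ B) (X : Set ℝ)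
    [CompactSpace X] (hπ : -π ≤ π) :
    ∃ A : ℝ → C(X × Icc (-π) π, ℝ) →L[ℝ] C(X, ℝ), (∀ k : ℕ, ContDiff ℝ k A) ∧
      ∀ h, |h| * B ≤ 1 / 2 → ∀ w (x : X), A h w x = ∫ z in -π..π,
        Kker α (z + h * (η x - η (x - z))) * (1 + h * deriv η (x - z)) *
          w (x, projIcc (-π) π hπ z) := by
  obtain ⟨f, hf, hfK⟩ := exists_contDiff_deformed_Kker hα hη hB X
  obtain ⟨Q, hQ⟩ := exists_clm_apply_eq_integral_mul (X := X) hπ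
    (intervalIntegrable_abs_rpow (r := α - 1) (by linarith [hα.1]) pi_pos.le)
  refine ⟨fun h => Q ∘L ContinuousLinearMap.mul ℝ C(X × Icc (-π) π, ℝ) (f h), fun k => ?_,
    fun h hh w x => ?_⟩
  · have hmul : ContDiff ℝ k (ContinuousLinearMap.mul ℝ C(X × Icc (-π) π, ℝ)) :=
      ContinuousLinearMap.contDiff _
    exact contDiff_const.clm_comp (hmul.comp (hf k))
  · refine (hQ _ x).trans (intervalIntegral.integral_congr fun z hz => ?_)
    rw [uIcc_of_le hπ] at hz
    rw [projIcc_of_mem hπ hz, ← hfK h hh x ⟨z, hz⟩]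
    exact (mul_assoc _ _ _).symm

theorem abs_integral_Kker_mul_bump_le {α : ℝ} (hα : α ∈ Ioo (0 : ℝ) 1) (hθ : 2 * θ.rOut ≤ π)
    {x : ℝ} (hx : |x - x₀| ≤ θ.rOut) {u : ℝ → ℝ} {M : ℝ} (hu : ∀ y, |u y| ≤ M) :
    |∫ z in -π..π, Kker α z * (θ (x - z) * u (x - z))| ≤
      (∫ z in -(2 * θ.rOut)..(2 * θ.rOut), |Kker α z|) * M := by
  refine abs_integral_mul_le_of_eq_zero (by linarith [θ.rOut_pos]) hθ
    (intervalIntegrable_Kker hα _ _) (fun z => ?_) fun z _ hz => ?_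
  · rw [abs_mul, abs_of_nonneg θ.nonneg]
    exact (mul_le_of_le_one_left (abs_nonneg _) θ.le_one).trans (hu _)
  · have hfar : θ.rOut ≤ dist (x - z) x₀ := by
      have := abs_sub_abs_le_abs_sub z (x - x₀)
      rw [dist_comm, dist_eq, show x₀ - (x - z) = z - (x - x₀) by ring]
      linarith
    rw [θ.zero_of_le_dist hfar, zero_mul]

theorem bump_eq_zero_of_pi_le (hηθ : η.rOut ≤ θ.rIn) (hθ : 2 * θ.rOut ≤ π) {x y : ℝ}
    (hx : |x - x₀| ≤ θ.rOut) (hy : π ≤ |x - y|) : η y = 0 := by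
  have hdist := abs_sub_abs_le_abs_sub (x - y) (x - x₀)
  rw [show x - y - (x - x₀) = x₀ - y by ring] at hdist
  refine η.zero_of_le_dist ?_
  rw [dist_comm, dist_eq]
  linarith [θ.rIn_lt_rOut]

theorem exists_clm_extension_by_cutoff (hφ : Continuous φ) (hηθ : η.rOut ≤ θ.rIn)
    (hle : x₀ - θ.rOut ≤ x₀ + θ.rOut) :
    ∃ (E : C(Icc (x₀ - θ.rOut) (x₀ + θ.rOut), ℝ) →L[ℝ]
        C(Icc (x₀ - θ.rOut) (x₀ + θ.rOut) × Icc (-π) π, ℝ))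
      (φfar : C(Icc (x₀ - θ.rOut) (x₀ + θ.rOut) × Icc (-π) π, ℝ)),
      (∀ u q, E u q = θ (q.1 - q.2) * u (projIcc _ _ hle (q.1 - q.2))) ∧
      ∀ (h : ℝ) v, (∀ x : Icc (x₀ - θ.rOut) (x₀ + θ.rOut), v x = φ (x + h * η x)) →
        ∀ q, (E v + φfar) q = φ (q.1 - q.2 + h * η (q.1 - q.2)) := by
  have hθ := θ.continuous
  obtain ⟨E, hE⟩ := exists_clm_apply_eq_mul_comp
    (Y := Icc (x₀ - θ.rOut) (x₀ + θ.rOut) × Icc (-π) π)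
    ⟨fun q => θ (q.1 - q.2), hθ.comp (by fun_prop)⟩
    ⟨fun q => projIcc _ _ hle (q.1 - q.2), continuous_projIcc.comp (by fun_prop)⟩
  refine ⟨E, ⟨fun q => (1 - θ (q.1 - q.2)) * φ (q.1 - q.2), by fun_prop⟩, hE,
    fun h v hv q => ?_⟩
  rw [ContinuousMap.add_apply, hE]
  simp only [ContinuousMap.coe_mk, hv, bump_mul_projIcc_add_one_sub_mul hηθ hle]

theorem exists_localized_convolution {α : ℝ} (hα : α ∈ Ioo (0 : ℝ) 1) (hφ : Continuous φ)
    (hper : Function.Periodic φ (2 * π)) (hηθ : η.rOut ≤ θ.rIn) (hθ : 2 * θ.rOut ≤ π) :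
    ∃ (T : ℝ → C(Icc (x₀ - θ.rOut) (x₀ + θ.rOut), ℝ) →L[ℝ]
        C(Icc (x₀ - θ.rOut) (x₀ + θ.rOut), ℝ))
      (g : ℝ → C(Icc (x₀ - θ.rOut) (x₀ + θ.rOut), ℝ)),
      (∀ k : ℕ, ContDiff ℝ k T) ∧ (∀ k : ℕ, ContDiff ℝ k g) ∧
      ‖T 0‖ ≤ ∫ z in -(2 * θ.rOut)..(2 * θ.rOut), |Kker α z| ∧
      ∀ᶠ h in 𝓝 0, ∀ v : C(Icc (x₀ - θ.rOut) (x₀ + θ.rOut), ℝ), (∀ x, v x = φ (x + h * η x)) →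
        ∀ x, (T h v + g h) x = ∫ y in -π..π, Kker α (x + h * η x - y) * φ y := by
  have hθpos := θ.rOut_pos
  have hle : x₀ - θ.rOut ≤ x₀ + θ.rOut := by linarith
  have hπ : -π ≤ π := by linarith [pi_pos]
  have hη : ContDiff ℝ (⊤ : ℕ∞) η := η.contDiff
  obtain ⟨B, hB⟩ := η.hasCompactSupport.deriv.exists_bound_of_continuous
    (hη.continuous_deriv (by exact_mod_cast le_top))
  set X := Icc (x₀ - θ.rOut) (x₀ + θ.rOut)
  obtain ⟨A, hA, hAK⟩ := exists_deformed_integral_operator hα hη hB X hπ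
  obtain ⟨E, φfar, hE, hEφ⟩ := exists_clm_extension_by_cutoff hφ hηθ hle
  have hX (x : X) : |(x : ℝ) - x₀| ≤ θ.rOut := by
    rw [abs_le]
    constructor <;> linarith [x.2.1, x.2.2]
  refine ⟨fun h => A h ∘L E, fun h => A h φfar, fun k => (hA k).clm_comp contDiff_const,
    fun k => (hA k).clm_apply contDiff_const, ?_, ?_⟩
  · have hnonneg : 0 ≤ ∫ z in -(2 * θ.rOut)..(2 * θ.rOut), |Kker α z| :=
      intervalIntegral.integral_nonneg (by linarith) fun _ _ => abs_nonneg _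
    refine ContinuousLinearMap.opNorm_le_bound _ hnonneg fun u => ?_
    refine (ContinuousMap.norm_le _ (by positivity)).mpr fun x => ?_
    refine le_of_eq_of_le ?_ (abs_integral_Kker_mul_bump_le hα hθ (hX x)
      fun y => u.norm_coe_le_norm (projIcc _ _ hle y))
    rw [ContinuousLinearMap.comp_apply, hAK 0 (by simp), norm_eq_abs]
    refine congrArg _ (intervalIntegral.integral_congr fun z hz => ?_)
    rw [uIcc_of_le hπ] at hz
    simp only [hE, projIcc_of_mem hπ hz, zero_mul, add_zero, mul_one]
  · have hsmall : ∀ᶠ h in 𝓝 (0 : ℝ), |h| * B ≤ 1 / 2 :=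
      (Continuous.tendsto' (by fun_prop) 0 0 (by simp)).eventually_le_const (by norm_num)
    filter_upwards [hsmall] with h hh v hv x
    rw [integral_Kker_comp_deformation α hper (hη.of_le (by exact_mod_cast le_top)) hB hh
      (bump_eq_zero_of_pi_le hηθ hθ (hX x) (by simp [abs_of_pos pi_pos]))
      (bump_eq_zero_of_pi_le hηθ hθ (hX x) (by simp [abs_of_pos pi_pos]))]
    have hsum : (A h (E v) + A h φfar) x = A h (E v + φfar) x := by rw [map_add]
    refine (hsum.trans (hAK h hh _ x)).trans (intervalIntegral.integral_congr fun z hz => ?_)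
    rw [uIcc_of_le hπ] at hz
    rw [hEφ h v hv, projIcc_of_mem hπ hz]

variable {α : ℝ} {k : ℕ}

theorem add_mul_bump_mem_closedBall {η : ContDiffBump x₀} {x h ε : ℝ} (hx : |x - x₀| ≤ ε)
    (hh : |h| ≤ ε) : x + h * η x ∈ Metric.closedBall x₀ (2 * ε) := by
  have hshift : |h * η x| ≤ ε := by
    rw [abs_mul, abs_of_nonneg η.nonneg]
    exact (mul_le_of_le_one_right (abs_nonneg h) η.le_one).trans hh
  rw [Metric.mem_closedBall, dist_eq, add_sub_right_comm]
  linarith [abs_add_le (x - x₀) (h * η x)]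

theorem contDiffAt_of_comp_eq_integral_Kker_of_closedBall (hα : α ∈ Ioo (0 : ℝ) 1)
    (hφ : Continuous φ) (hper : Function.Periodic φ (2 * π)) (hk : k ≠ 0) {s : C(ℝ, ℝ)}
    (hs : ContDiff ℝ k s) {κ m ε : ℝ} (hε : 0 < ε) (hεπ : 2 * ε ≤ π)
    (hK : ∫ z in -(2 * ε)..(2 * ε), |Kker α z| < κ)
    (hκ : ∀ x ∈ Metric.closedBall x₀ (2 * ε), κ ≤ |deriv s (φ x)|)
    (heq : ∀ x ∈ Metric.closedBall x₀ (2 * ε),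
      s (φ x) = (∫ y in -π..π, Kker α (x - y) * φ y) + m) :
    ContDiffAt ℝ k φ x₀ := by
  let η : ContDiffBump x₀ := ⟨ε / 4, ε / 2, by positivity, by linarith⟩
  let θ : ContDiffBump x₀ := ⟨ε / 2, ε, by positivity, by linarith⟩
  have hη : Continuous η := η.continuous
  set X := Icc (x₀ - θ.rOut) (x₀ + θ.rOut)
  obtain ⟨T, g, hT, hg, hTnorm, hTg⟩ :=
    exists_localized_convolution (η := η) (θ := θ) hα hφ hper le_rfl hεπ
  let v : ℝ → C(X, ℝ) :=
    ContinuousMap.curry ⟨fun q : ℝ × X => φ (q.2 + q.1 * η q.2), by fun_prop⟩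
  have hmem {h : ℝ} (hh : |h| ≤ ε) (x : X) : x + h * η x ∈ Metric.closedBall x₀ (2 * ε) :=
    add_mul_bump_mem_closedBall
      (abs_le.mpr ⟨by linarith [x.2.1], by linarith [x.2.2]⟩) hh
  have hsmall : ∀ᶠ h in 𝓝 (0 : ℝ), |h| ≤ ε :=
    (continuous_abs.tendsto' 0 0 abs_zero).eventually_le_const hε
  have hv : ContDiffAt ℝ k v 0 := by
    refine contDiffAt_of_comp_eventuallyEq hk hs (hT k).contDiffAt
      ((hg k).add contDiff_const).contDiffAt (ContinuousMap.continuous _).continuousAt ?_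
      (fun x => hκ _ (hmem (by simpa using hε.le) x)) (hTnorm.trans_lt hK)
      (g := fun h => g h + ContinuousMap.const X m)
    filter_upwards [hsmall, hTg] with h hh hTg
    ext x
    rw [← add_assoc, ContinuousMap.add_apply, hTg (v h) (fun _ => rfl) x]
    exact heq _ (hmem hh x)
  let x₁ : X := ⟨x₀, by linarith, by linarith⟩
  have hshifted : ContDiffAt ℝ k (fun h => φ (x₀ + h)) 0 := by
    refine (hv.continuousLinearMap_comp (ContinuousMap.evalCLM ℝ x₁)).congr_of_eventuallyEq
      (.of_forall fun h => ?_)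
    have hη₁ : η x₀ = 1 := η.one_of_mem_closedBall (Metric.mem_closedBall_self η.rIn_pos.le)
    change φ (x₀ + h) = φ (x₀ + h * η x₀)
    rw [hη₁, mul_one]
  have hunshift : ContDiffAt ℝ k (fun x => φ (x₀ + (x - x₀))) x₀ :=
    ContDiffAt.comp x₀ (g := fun h => φ (x₀ + h)) (f := fun x => x - x₀)
      (by rwa [sub_self]) (contDiffAt_id.sub contDiffAt_const)
  simpa only [add_sub_cancel] using hunshift

theorem contDiffAt_of_comp_eq_integral_Kker (hα : α ∈ Ioo (0 : ℝ) 1) (hφ : Continuous φ)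
    (hper : Function.Periodic φ (2 * π)) (hk : k ≠ 0) {s : C(ℝ, ℝ)} (hs : ContDiff ℝ k s)
    (hne : deriv s (φ x₀) ≠ 0) {m : ℝ}
    (heq : ∀ᶠ x in 𝓝 x₀, s (φ x) = (∫ y in -π..π, Kker α (x - y) * φ y) + m) :
    ContDiffAt ℝ k φ x₀ := by
  have hderiv : Continuous fun x => |deriv s (φ x)| :=
    ((hs.continuous_deriv (by exact_mod_cast Nat.one_le_iff_ne_zero.mpr hk)).comp hφ).abs
  have hκ : 0 < |deriv s (φ x₀)| := abs_pos.mpr hne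
  obtain ⟨R, hR, hball⟩ := Metric.nhds_basis_closedBall.eventually_iff.mp
    (heq.and (hderiv.continuousAt.eventually_const_le (half_lt_self hκ)))
  have hK : ∀ᶠ r in 𝓝 0, ∫ z in -r..r, |Kker α z| < |deriv s (φ x₀)| / 2 :=
    (tendsto_integral_abs_neg_self (intervalIntegrable_Kker hα)).eventually_lt_const
      (half_pos hκ)
  obtain ⟨r, ⟨hKr, hr⟩, hr₀ : 0 < r⟩ :=
    (((hK.and (eventually_le_nhds (lt_min pi_pos hR))).filter_mono nhdsWithin_le_nhds).and
      (self_mem_nhdsWithin (s := Ioi 0))).exists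
  have hsub : Metric.closedBall x₀ (2 * (r / 2)) ⊆ Metric.closedBall x₀ R :=
    Metric.closedBall_subset_closedBall (by linarith [hr.trans (min_le_right π R)])
  exact contDiffAt_of_comp_eq_integral_Kker_of_closedBall hα hφ hper hk hs (half_pos hr₀)
    (by linarith [hr.trans (min_le_left π R)]) (by rwa [mul_div_cancel₀ r two_ne_zero])
    (fun x hx => (hball (hsub hx)).2) (fun x hx => (hball (hsub hx)).1)

end LocalRegularity

namespace IsSteadySolution

variable {α c : ℝ} {n φ : ℝ → ℝ}

theorem contDiffAt (h : IsSteadySolution α c n φ)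
    (hα : α ∈ Ioo (0 : ℝ) 1) {x₀ : ℝ} {k : ℕ} (hk : k ≠ 0)
    (hn : ContDiffAt ℝ k n (φ x₀)) (hne : deriv n (φ x₀) ≠ c) : ContDiffAt ℝ k φ x₀ := by
  obtain ⟨hφ, hper, -, heq⟩ := h
  obtain ⟨R, hR, hball⟩ := Metric.eventually_nhds_iff_ball.mp (hn.eventually (by simp))
  have hcontDiffOn : ContDiffOn ℝ k (fun y => c * y - n y) (Metric.ball (φ x₀) R) := fun y hy =>
    ((contDiffAt_const.mul contDiffAt_id).sub (hball y hy)).contDiffWithinAt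
  obtain ⟨s, hs, hsn⟩ := exists_contDiff_eqOn_closedBall (n := k) (half_pos hR) (half_lt_self hR)
    (by exact_mod_cast hcontDiffOn)
  have hsn' : ∀ᶠ y in 𝓝 (φ x₀), s y = c * y - n y :=
    eventually_of_mem (Metric.closedBall_mem_nhds _ (half_pos hR)) hsn
  refine contDiffAt_of_comp_eq_integral_Kker (s := ⟨s, hs.continuous⟩) hα hφ hper hk
    (by exact_mod_cast hs) ?_ (m := -(1 / (2 * π) * ∫ y in -π..π, n (φ y)))
    ((hφ.tendsto x₀).eventually hsn' |>.mono fun x hx => ?_)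
  · have hderiv : HasDerivAt (fun y => c * y - n y) (c * 1 - deriv n (φ x₀)) (φ x₀) :=
      ((hasDerivAt_id' _).const_mul c).sub
        (hn.differentiableAt (by exact_mod_cast hk)).hasDerivAt
    rw [ContinuousMap.coe_mk, (hderiv.congr_of_eventuallyEq hsn').deriv, mul_one]
    exact sub_ne_zero.mpr hne.symm
  · rw [heq x, ContinuousMap.coe_mk, hx]
    ring

theorem isBell (h : IsSteadySolution α c n φ) (heven : Function.Even φ)
    (hmono : MonotoneOn φ (Ioo (-π) 0)) : IsBell φ where
  continuous := h.1
  periodic := h.2.1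
  even := heven
  monotoneOn := monotoneOn_Icc_of_monotoneOn_Ioo (by linarith [pi_pos]) h.1.continuousOn hmono

theorem contDiffOn_of_nAbs {p : ℝ} (h : IsSteadySolution α c (nAbs p) φ)
    (hα : α ∈ Ioo (0 : ℝ) 1) (hp : 1 < p) (hc : 0 ≤ c) :
    ContDiffOn ℝ (⊤ : ℕ∞) φ {x | φ x < 0} := by
  intro x (hx : φ x < 0)
  have hslope : nAbs' p (φ x) < 0 :=
    mul_neg_of_neg_of_pos (mul_neg_of_pos_of_neg (by linarith) hx)
      (Real.rpow_pos_of_pos (abs_pos.mpr hx.ne) _)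
  refine (contDiffAt_infty.mpr fun k => ?_).contDiffWithinAt
  refine (h.contDiffAt hα k.succ_ne_zero (by exact_mod_cast contDiffAt_nAbs hx.ne) ?_).of_le
    (by exact_mod_cast k.le_succ)
  rw [(hasDerivAt_nAbs hp (φ x)).deriv]
  exact (hslope.trans_le hc).ne

end IsSteadySolution

theorem statement14_general (α p : ℝ) (hα : α ∈ Ioo (0 : ℝ) 1) (hp : 1 < p) :
    ∃ δ > 0, ∀ (c : ℝ) (φ : ℝ → ℝ),
      (∃ x, φ x ≠ 0) → (∀ x, φ (-x) = φ x) → MonotoneOn φ (Ioo (-π) 0) →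
      ((IsSteadySolution α c (nAbs p) φ → nAbs' p (φ 0) ≤ c →
          δ ≤ c ∧ δ ≤ c - nAbs' p (φ (-π)) ∧
          ∃ U : Set ℝ, IsOpen U ∧ -π ∈ U ∧ ContDiffOn ℝ (⊤ : ℕ∞) φ U) ∧
       (IsSteadySolution α c (nSgn p) φ → δ ≤ c)) := by
  obtain ⟨δ, hδ, hspeed⟩ := IsSteadySolution.exists_pos_forall_le_speed hα hp
  refine ⟨min δ 1, lt_min hδ one_pos, fun c φ hne heven hmono =>
    ⟨fun h hcrest => ?_, fun h => ?_⟩⟩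
  · have hbell := h.isBell heven hmono
    have hδc : δ ≤ c := hspeed c φ h hbell hne hcrest
    exact ⟨(min_le_left δ 1).trans hδc,
      (min_le_right δ 1).trans (h.one_le_sub_nAbs' hα hp hbell hne),
      {x | φ x < 0}, isOpen_lt h.1 continuous_const, hbell.trough_neg h.2.2.1 hne,
      h.contDiffOn_of_nAbs hα hp (hδ.le.trans hδc)⟩
  · exact (min_le_right δ 1).trans (h.one_le_of_nSgn hα hp.le (h.isBell heven hmono) hne)

/-- Uniform lower bound on the wave speed, depending only on `α`
and `p`: `c ≥ δ` for every even, nontrivial steady solution increasing on `(−π,0)`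
with `n′(φ) ≤ c` (where in case sgn one additionally assumes `φ(−π/2) = 0`); in case
abs one even has `c − n′(φ(−π)) ≥ δ`, so `φ` is smooth near `−π`. -/
theorem statement14 (α p : ℝ) (hα : α ∈ Set.Ioo (0:ℝ) 1) (hp : 1 < p) :
    ∃ δ > 0, ∀ (c : ℝ) (φ : ℝ → ℝ), 0 < c →
      (∃ x, φ x ≠ 0) → (∀ x, φ (-x) = φ x) → MonotoneOn φ (Set.Ioo (-π) 0) →
      ((IsSteadySolution α c (nAbs p) φ → (∀ x, nAbs' p (φ x) ≤ c) →
          δ ≤ c ∧ δ ≤ c - nAbs' p (φ (-π)) ∧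
          ∃ U : Set ℝ, IsOpen U ∧ -π ∈ U ∧ ContDiffOn ℝ (⊤ : ℕ∞) φ U) ∧
       (IsSteadySolution α c (nSgn p) φ → (∀ x, nSgn' p (φ x) ≤ c) →
          φ (-(π / 2)) = 0 → δ ≤ c)) := by
  obtain ⟨δ, hδ, h⟩ := statement14_general α p hα hp
  exact ⟨δ, hδ, fun c φ _ hne heven hmono => (h c φ hne heven hmono).imp
    (fun habs hsol hle => habs hsol (hle 0)) fun hsgn hsol _ _ => hsgn hsol⟩
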